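/- arXiv:2412.21048 — 6 statements merged into one kernel-verified Lean document; each statement's English description precedes it below -/
import Mathlib

section
/- Let f : ℝⁿ → ℝ be a C^∞ function with compact support contained in Ω and with ∫_{ℝⁿ} f = 0, and let u be its Bogovskiĭ field. Then u is continuously differentiable on ℝⁿ, u(x) = 0 for every x outside the closure of Ω, and div u(x) = f(x) for every x ∈ ℝⁿ. -/
open MeasureTheory Metric Set Filter Topology

/-!
The substitution `w = (x - y) / s` removes the singularity of the Bogovskiĭ kernel and turns the
field into `u(x) = ∫₀¹ ∫ f(x - s w) ω(x - s w + w) w dw ds`: mass is carried from each point `z` to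
each point `z + w` along a straight segment, at rate `f(z) ω(z + w)`. The integrand is now as smooth
as `f` and `ω`, so one may differentiate under the integral sign. The divergence of
`x ↦ h(x - s w) w` is the derivative of `h` at `x - s w` in the direction `w`, that is,
`-∂ₛ h(x - s w)`; integrating in `s` leaves `h(x) - h(x - w)`, and integrating this in `w` with
`h(z) = f(z) ω(z + w)` gives `div u = (∫ ω) f - (∫ f) ω`.
-/

universe u

section ParametricIntegral

variable {E P V : Type*} [NormedAddCommGroup E] [NormedSpace ℝ E] [LocallyCompactSpace E]
  [NormedAddCommGroup V] [NormedSpace ℝ V]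

theorem hasFDerivAt_setIntegral_of_isCompact [TopologicalSpace P] [T2Space P]
    [MeasurableSpace P] [OpensMeasurableSpace P] {μ : Measure P} [IsFiniteMeasureOnCompacts μ]
    {S : Set P} (hS : IsCompact S) {F : E → P → V} {F' : E → P → E →L[ℝ] V}
    (hF : ∀ x, Continuous (F x)) (hF' : Continuous (Function.uncurry F'))
    (hderiv : ∀ x p, HasFDerivAt (F · p) (F' x p) x) (x₀ : E) :
    HasFDerivAt (fun x => ∫ p in S, F x p ∂μ) (∫ p in S, F' x₀ p ∂μ) x₀ := by
  obtain ⟨K, hK, hKx₀⟩ := exists_compact_mem_nhds x₀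
  obtain ⟨M, hM⟩ := (hK.prod hS).bddAbove_image hF'.norm.continuousOn
  refine hasFDerivAt_integral_of_dominated_of_fderiv_le (bound := fun _ => M) hKx₀
    (.of_forall fun x =>
      (hF x).continuousOn.aestronglyMeasurable_of_isCompact hS hS.measurableSet)
    ((hF x₀).continuousOn.integrableOn_compact hS)
    ((hF'.uncurry_left x₀).continuousOn.aestronglyMeasurable_of_isCompact hS hS.measurableSet)
    ?_ (continuousOn_const.integrableOn_compact hS) (.of_forall fun p x _ => hderiv x p)
  filter_upwards [ae_restrict_mem hS.measurableSet] with p hp x hx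
  exact hM ⟨(x, p), ⟨hx, hp⟩, rfl⟩

end ParametricIntegral

-- `E` and `V` share a universe because the induction on `k` replaces `V` by `E →L[ℝ] V`.
theorem contDiff_setIntegral_of_isCompact {E V : Type u} {P : Type*}
    [NormedAddCommGroup E] [NormedSpace ℝ E] [LocallyCompactSpace E]
    [NormedAddCommGroup V] [NormedSpace ℝ V] [NormedAddCommGroup P] [NormedSpace ℝ P]
    [SecondCountableTopology P] [MeasurableSpace P] [OpensMeasurableSpace P]
    {μ : Measure P} [IsLocallyFiniteMeasure μ] {S : Set P} (hS : IsCompact S)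
    {F : E → P → V} {k : ℕ∞} (hF : ContDiff ℝ k (Function.uncurry F)) :
    ContDiff ℝ k (fun x => ∫ p in S, F x p ∂μ) := by
  suffices h : ∀ m : ℕ, ContDiff ℝ m (Function.uncurry F) →
      ContDiff ℝ m (fun x => ∫ p in S, F x p ∂μ) from
    contDiff_iff_forall_nat_le.2 fun m hm => h m (hF.of_le (mod_cast hm))
  clear hF
  intro m
  induction m generalizing V with
  | zero =>
    intro hF
    exact contDiff_zero.2 (continuous_parametric_integral_of_continuous hF.continuous hS)
  | succ m ih =>
    intro hF
    have hderiv : ∀ x p, HasFDerivAt (F · p) (fderiv ℝ (F · p) x) x := fun x p =>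
      ((hF.comp (contDiff_id.prodMk contDiff_const)).differentiable
        (by norm_cast) x).hasFDerivAt
    have hF' : ContDiff ℝ m (Function.uncurry fun x p => fderiv ℝ (F · p) x) :=
      ContDiff.fderiv (f := fun (q : E × P) y => F y q.2)
        (hF.comp (contDiff_snd.prodMk (contDiff_snd.comp contDiff_fst))) contDiff_fst le_rfl
    exact contDiff_succ_iff_hasFDerivAt.2 ⟨_, ih hF', fun x =>
      hasFDerivAt_setIntegral_of_isCompact hS (hF.continuous.uncurry_left ·) hF'.continuous
        hderiv x⟩

theorem continuous_fderiv_of_contDiff_uncurry {W E V : Type*} [NormedAddCommGroup W]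
    [NormedSpace ℝ W] [NormedAddCommGroup E] [NormedSpace ℝ E] [NormedAddCommGroup V]
    [NormedSpace ℝ V] {h : W → E → V} (hh : ContDiff ℝ 1 (Function.uncurry h)) :
    Continuous fun q : W × E => fderiv ℝ (h q.1) q.2 :=
  (ContDiff.fderiv (m := 1) (n := 0) (f := fun q : W × E => h q.1)
    (hh.comp ((contDiff_fst.comp contDiff_fst).prodMk contDiff_snd)) contDiff_snd
    (by simp)).continuous

theorem integral_fderiv_sub_smul {E V : Type*} [NormedAddCommGroup E] [NormedSpace ℝ E]
    [NormedAddCommGroup V] [NormedSpace ℝ V] [CompleteSpace V] {g : E → V}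
    (hg : ContDiff ℝ 1 g) (x w : E) :
    ∫ s in Icc (0 : ℝ) 1, fderiv ℝ g (x - s • w) w = g x - g (x - w) := by
  have hderiv : ∀ s : ℝ,
      HasDerivAt (fun s : ℝ => -g (x - s • w)) (fderiv ℝ g (x - s • w) w) s := by
    intro s
    have hline : HasDerivAt (fun s : ℝ => x - s • w) (-w) s := by
      simpa using ((hasDerivAt_id s).smul_const w).const_sub x
    have hcomp := (hg.differentiable one_ne_zero _).hasFDerivAt.comp_hasDerivAt s hline
    exact hcomp.fun_neg.congr_deriv (by rw [map_neg, neg_neg])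
  have hcont : Continuous fun s : ℝ => fderiv ℝ g (x - s • w) w := by
    have := hg.continuous_fderiv one_ne_zero
    fun_prop
  rw [integral_Icc_eq_integral_Ioc, ← intervalIntegral.integral_of_le zero_le_one,
    intervalIntegral.integral_eq_sub_of_hasDerivAt (fun s _ => hderiv s)
      (hcont.intervalIntegrable 0 1)]
  simp only [one_smul, zero_smul, sub_zero, neg_sub_neg]

section SegmentField

variable {E : Type*} [NormedAddCommGroup E] [NormedSpace ℝ E] [MeasurableSpace E]

/-- The superposition, over all `w ∈ S` and all points `z`, of the vector fields carried by the
segments from `z` to `z + w`, each with constant value `w` and weight `h w z`. The value at `x`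
collects the segments through `x`, namely those with `z = x - s • w` for some `s ∈ [0, 1]`. -/
noncomputable def segmentField (μ : Measure E) (S : Set E) (h : E → E → ℝ) (x : E) : E :=
  ∫ p in Icc (0 : ℝ) 1 ×ˢ S, h p.2 (x - p.1 • p.2) • p.2 ∂(volume.prod μ)

variable [FiniteDimensional ℝ E] [BorelSpace E] {μ : Measure E} [IsLocallyFiniteMeasure μ]
  {S : Set E} {h : E → E → ℝ}

theorem contDiff_segmentField (hS : IsCompact S) {k : ℕ∞}
    (hh : ContDiff ℝ k (Function.uncurry h)) : ContDiff ℝ k (segmentField μ S h) := by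
  have hintegrand : ContDiff ℝ k (Function.uncurry fun (x : E) (p : ℝ × E) =>
      h p.2 (x - p.1 • p.2) • p.2) := by
    have hline : ContDiff ℝ k fun q : E × ℝ × E => (q.2.2, q.1 - q.2.1 • q.2.2) := by fun_prop
    exact (hh.comp hline).smul (by fun_prop)
  exact contDiff_setIntegral_of_isCompact (isCompact_Icc.prod hS) hintegrand

theorem hasFDerivAt_segmentField (hS : IsCompact S) (hh : ContDiff ℝ 1 (Function.uncurry h))
    (x : E) :
    HasFDerivAt (segmentField μ S h)
      (∫ p in Icc (0 : ℝ) 1 ×ˢ S, (fderiv ℝ (h p.2) (x - p.1 • p.2)).smulRight p.2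
        ∂(volume.prod μ)) x := by
  refine hasFDerivAt_setIntegral_of_isCompact (isCompact_Icc.prod hS)
    (F' := fun x p => (fderiv ℝ (h p.2) (x - p.1 • p.2)).smulRight p.2) (fun x => ?_) ?_
    (fun x p => ?_) x
  · have := hh.continuous
    fun_prop
  · exact (ContinuousLinearMap.smulRightL ℝ E E).continuous₂.comp
      (((continuous_fderiv_of_contDiff_uncurry hh).comp
        (by fun_prop : Continuous fun q : E × ℝ × E => (q.2.2, q.1 - q.2.1 • q.2.2))).prodMk
        (by fun_prop))
  · have hdiff : DifferentiableAt ℝ (h p.2) (x - p.1 • p.2) :=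
      (hh.comp (contDiff_const.prodMk contDiff_id)).differentiable one_ne_zero _
    exact (hdiff.hasFDerivAt.comp x ((hasFDerivAt_id x).sub_const _)).smul_const p.2

theorem trace_fderiv_segmentField (hS : IsCompact S) (hh : ContDiff ℝ 1 (Function.uncurry h))
    (x : E) :
    LinearMap.trace ℝ E (fderiv ℝ (segmentField μ S h) x) = ∫ w in S, (h w x - h w (x - w)) ∂μ := by
  let traceL : (E →L[ℝ] E) →L[ℝ] ℝ :=
    (LinearMap.trace ℝ E ∘ₗ ContinuousLinearMap.coeLM ℝ).toContinuousLinearMap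
  let A : ℝ × E → E →L[ℝ] E := fun p => (fderiv ℝ (h p.2) (x - p.1 • p.2)).smulRight p.2
  have hcont : Continuous fun p : ℝ × E => fderiv ℝ (h p.2) (x - p.1 • p.2) :=
    (continuous_fderiv_of_contDiff_uncurry hh).comp
      (by fun_prop : Continuous fun p : ℝ × E => (p.2, x - p.1 • p.2))
  have hA : IntegrableOn A (Icc 0 1 ×ˢ S) (volume.prod μ) :=
    ((ContinuousLinearMap.smulRightL ℝ E E).continuous₂.comp
      (hcont.prodMk continuous_snd)).continuousOn.integrableOn_compact (isCompact_Icc.prod hS)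
  have htrace : ∀ p, traceL (A p) = fderiv ℝ (h p.2) (x - p.1 • p.2) p.2 := fun p =>
    LinearMap.trace_smulRight _ _
  calc LinearMap.trace ℝ E (fderiv ℝ (segmentField μ S h) x)
      = traceL (∫ p in Icc (0 : ℝ) 1 ×ˢ S, A p ∂(volume.prod μ)) := by
        rw [(hasFDerivAt_segmentField hS hh x).fderiv]; rfl
    _ = ∫ p in Icc (0 : ℝ) 1 ×ˢ S, fderiv ℝ (h p.2) (x - p.1 • p.2) p.2 ∂(volume.prod μ) := by
        simp only [← traceL.integral_comp_comm hA, htrace]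
    _ = ∫ w in S, (∫ s in Icc (0 : ℝ) 1, fderiv ℝ (h w) (x - s • w) w) ∂μ := by
        rw [← setIntegral_prod_swap, setIntegral_prod]
        · rfl
        · have hc : Continuous fun q : E × ℝ => fderiv ℝ (h q.1) (x - q.2 • q.1) q.1 :=
            (hcont.comp continuous_swap).clm_apply continuous_fst
          exact hc.continuousOn.integrableOn_compact (hS.prod isCompact_Icc)
    _ = ∫ w in S, (h w x - h w (x - w)) ∂μ := by
        refine integral_congr_ae (.of_forall fun w => ?_)
        exact integral_fderiv_sub_smul (hh.comp (contDiff_const.prodMk contDiff_id)) x w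

end SegmentField

section Rescaling

variable {E V : Type*} [NormedAddCommGroup E] [NormedSpace ℝ E] [FiniteDimensional ℝ E]
  [MeasurableSpace E] [BorelSpace E] (μ : Measure E) [μ.IsAddHaarMeasure]
  [NormedAddCommGroup V] [NormedSpace ℝ V]

theorem integral_inv_pow_smul_comp_inv_smul_sub (g : E → V) {s : ℝ} (hs : 0 < s) (x : E) :
    ∫ y, (s ^ Module.finrank ℝ E)⁻¹ • g (s⁻¹ • (x - y)) ∂μ = ∫ w, g w ∂μ := by
  rw [integral_sub_left_eq_self (fun y => (s ^ Module.finrank ℝ E)⁻¹ • g (s⁻¹ • y)) μ x,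
    integral_smul, Measure.integral_comp_inv_smul_of_nonneg _ _ hs.le,
    inv_smul_smul₀ (pow_ne_zero _ hs.ne')]

variable {μ} {ν : Measure ℝ} {g : ℝ × E → V}

theorem integrable_prod_inv_pow_smul_comp (hν : ∀ᵐ s ∂ν, 0 < s) (hg : StronglyMeasurable g)
    (hint : Integrable g (ν.prod μ)) (x : E) :
    Integrable (fun p : ℝ × E =>
      (p.1 ^ Module.finrank ℝ E)⁻¹ • g (p.1, p.1⁻¹ • (x - p.2))) (ν.prod μ) := by
  have hmeas : AEStronglyMeasurable (fun p : ℝ × E =>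
      (p.1 ^ Module.finrank ℝ E)⁻¹ • g (p.1, p.1⁻¹ • (x - p.2))) (ν.prod μ) := by
    have hscale : Measurable fun p : ℝ × E => (p.1 ^ Module.finrank ℝ E)⁻¹ := by fun_prop
    exact (hscale.stronglyMeasurable.smul
      (hg.comp_measurable (by fun_prop))).aestronglyMeasurable
  obtain ⟨hslice, hnorm⟩ := (integrable_prod_iff hg.aestronglyMeasurable).1 hint
  refine (integrable_prod_iff hmeas).2 ⟨?_, hnorm.congr ?_⟩
  · filter_upwards [hslice, hν] with s hgs hs
    exact (((integrable_comp_smul_iff μ _ (inv_ne_zero hs.ne')).2 hgs).comp_sub_left x).smul _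
  · filter_upwards [hν] with s hs
    simp only [norm_smul, Real.norm_of_nonneg (inv_nonneg.2 (pow_nonneg hs.le _))]
    exact (integral_inv_pow_smul_comp_inv_smul_sub μ (fun w => ‖g (s, w)‖) hs x).symm

theorem integral_integral_inv_pow_smul_comp [SFinite ν] (hν : ∀ᵐ s ∂ν, 0 < s)
    (hg : StronglyMeasurable g) (hint : Integrable g (ν.prod μ)) (x : E) :
    ∫ y, ∫ s, (s ^ Module.finrank ℝ E)⁻¹ • g (s, s⁻¹ • (x - y)) ∂ν ∂μ =
      ∫ p, g p ∂(ν.prod μ) := by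
  rw [← integral_integral_swap (integrable_prod_inv_pow_smul_comp hν hg hint x),
    integral_prod g hint]
  refine integral_congr_ae ?_
  filter_upwards [hν] with s hs
  exact integral_inv_pow_smul_comp_inv_smul_sub μ (fun w => g (s, w)) hs x

end Rescaling

section Bogovskii

open scoped Pointwise

theorem mul_comp_add_eq_zero_of_notMem_tsupport_sub {X R : Type*} [AddCommGroup X]
    [TopologicalSpace X] [MulZeroClass R] {f ω : X → R} {w : X}
    (hw : w ∉ tsupport ω - tsupport f) (z : X) : f z * ω (z + w) = 0 := by
  by_contra h
  exact hw ⟨z + w, subset_tsupport ω (right_ne_zero_of_mul h),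
    z, subset_tsupport f (left_ne_zero_of_mul h), add_sub_cancel_left z w⟩

theorem integral_mul_comp_add_sub {X : Type*} [AddCommGroup X] [MeasurableSpace X]
    [MeasurableAdd X] [MeasurableNeg X] {μ : Measure X} [μ.IsAddLeftInvariant]
    [μ.IsNegInvariant] {f ω : X → ℝ} (hω : Integrable ω μ) (hf : Integrable f μ) (x : X) :
    ∫ w, (f x * ω (x + w) - f (x - w) * ω (x - w + w)) ∂μ =
      (∫ z, ω z ∂μ) * f x - (∫ z, f z ∂μ) * ω x := by
  simp only [sub_add_cancel]
  rw [integral_sub ((hω.comp_add_left x).const_mul _) ((hf.comp_sub_left x).mul_const _),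
    integral_const_mul, integral_mul_const, integral_add_left_eq_self, integral_sub_left_eq_self,
    mul_comm (f x)]

variable {E : Type*} [NormedAddCommGroup E] [NormedSpace ℝ E]

/-- The Bogovskiĭ kernel `G(x, y)` with weight `ω`, in a space of dimension `finrank ℝ E`. The
formula is used for `x = y` too, where it gives `G(x, x) = 0`. -/
noncomputable def bogovskiiKernel (ω : E → ℝ) (x y : E) : E :=
  ∫ s in Ioo (0 : ℝ) 1,
    ((s ^ Module.finrank ℝ E)⁻¹ * ω (y + s⁻¹ • (x - y))) • (s⁻¹ • (x - y))

/-- The Bogovskiĭ field of `f` with weight `ω`, the candidate solution of `div u = f`. The integral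
runs over the whole space instead of a domain containing the support of `f`. -/
noncomputable def bogovskiiField [MeasurableSpace E] (μ : Measure E) (ω f : E → ℝ) (x : E) : E :=
  ∫ y, f y • bogovskiiKernel ω x y ∂μ

variable {Ω B : Set E} {ω f : E → ℝ}

theorem bogovskiiKernel_self (ω : E → ℝ) (x : E) : bogovskiiKernel ω x x = 0 := by
  simp only [bogovskiiKernel, sub_self, smul_zero, integral_zero]

-- The integrand is the rescaling of `w ↦ (f (x - s • w) * ω (x - s • w + w)) • w` at
-- `w = s⁻¹ • (x - y)`, left unsimplified to match `integral_integral_inv_pow_smul_comp`.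
theorem smul_bogovskiiKernel (ω f : E → ℝ) (x y : E) :
    f y • bogovskiiKernel ω x y = ∫ s in Ioo (0 : ℝ) 1, (s ^ Module.finrank ℝ E)⁻¹ •
      (f (x - s • s⁻¹ • (x - y)) * ω (x - s • s⁻¹ • (x - y) + s⁻¹ • (x - y))) •
        s⁻¹ • (x - y) := by
  rw [bogovskiiKernel, ← integral_smul]
  refine setIntegral_congr_fun measurableSet_Ioo fun s hs => ?_
  simp only [smul_inv_smul₀ hs.1.ne', sub_sub_cancel, smul_smul]
  congr 1
  ring

theorem bogovskiiKernel_eq_zero_of_notMem (hΩ : ∀ z ∈ B, StarConvex ℝ z Ω)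
    (hω : Function.support ω ⊆ B) {x y : E} (hx : x ∉ Ω) (hy : y ∈ Ω) :
    bogovskiiKernel ω x y = 0 := by
  refine setIntegral_eq_zero_of_forall_eq_zero fun s hs => ?_
  suffices hz : ω (y + s⁻¹ • (x - y)) = 0 by rw [hz, mul_zero, zero_smul]
  by_contra hz
  have hcomb : s • (y + s⁻¹ • (x - y)) + (1 - s) • y = x := by
    rw [smul_add, smul_inv_smul₀ hs.1.ne']
    module
  exact hx (hcomb ▸ hΩ _ (hω hz) hy hs.1.le (sub_nonneg.2 hs.2.le) (add_sub_cancel s 1))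

variable [MeasurableSpace E] {μ : Measure E}

theorem bogovskiiField_eq_zero_of_notMem (hΩ : ∀ z ∈ B, StarConvex ℝ z Ω)
    (hω : Function.support ω ⊆ B) (hf : Function.support f ⊆ Ω) {x : E} (hx : x ∉ Ω) :
    bogovskiiField μ ω f x = 0 := by
  refine integral_eq_zero_of_ae (.of_forall fun y => ?_)
  change f y • bogovskiiKernel ω x y = 0
  by_cases hy : y ∈ Ω
  · rw [bogovskiiKernel_eq_zero_of_notMem hΩ hω hx hy, smul_zero]
  · rw [Function.notMem_support.1 (mt (@hf y) hy), zero_smul]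

theorem setIntegral_smul_eq_bogovskiiField (hf : Function.support f ⊆ Ω) {G : E → E → E}
    (hG : ∀ x y, x ≠ y → G x y = bogovskiiKernel ω x y) (hGdiag : ∀ x, G x x = 0) (x : E) :
    ∫ y in Ω, f y • G x y ∂μ = bogovskiiField μ ω f x := by
  obtain rfl : G = bogovskiiKernel ω := by
    ext1 x
    ext1 y
    obtain rfl | hxy := eq_or_ne x y
    · rw [hGdiag, bogovskiiKernel_self]
    · exact hG x y hxy
  exact setIntegral_eq_integral_of_forall_compl_eq_zero fun y hy => by
    rw [Function.notMem_support.1 (mt (@hf y) hy), zero_smul]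

variable [FiniteDimensional ℝ E] [BorelSpace E] [μ.IsAddHaarMeasure]

theorem bogovskiiField_eq_segmentField (hω : Continuous ω) (hf : Continuous f) {S : Set E}
    (hS : IsCompact S) (hSzero : ∀ w ∉ S, ∀ z, f z * ω (z + w) = 0) :
    bogovskiiField μ ω f = segmentField μ S fun w z => f z * ω (z + w) := by
  ext1 x
  let g : ℝ × E → E := fun p => (f (x - p.1 • p.2) * ω (x - p.1 • p.2 + p.2)) • p.2
  have hg : Continuous g := by fun_prop
  have hgzero : ∀ p ∈ Icc (0 : ℝ) 1 ×ˢ univ, p ∉ Icc (0 : ℝ) 1 ×ˢ S → g p = 0 := fun p hp hpS => by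
    simp only [g, hSzero p.2 (fun h => hpS ⟨hp.1, h⟩), zero_smul]
  have hrestrict : (volume.restrict (Ioo (0 : ℝ) 1)).prod μ =
      (volume.prod μ).restrict (Icc 0 1 ×ˢ univ) := by
    rw [Measure.restrict_congr_set Ioo_ae_eq_Icc, ← Measure.prod_restrict, Measure.restrict_univ]
  have hint : Integrable g ((volume.restrict (Ioo (0 : ℝ) 1)).prod μ) := by
    rw [hrestrict]
    exact (hg.continuousOn.integrableOn_compact (isCompact_Icc.prod hS)).of_forall_sdiff_eq_zero
      (measurableSet_Icc.prod .univ) fun p hp => hgzero p hp.1 hp.2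
  calc bogovskiiField μ ω f x
      = ∫ y, (∫ s in Ioo (0 : ℝ) 1,
          (s ^ Module.finrank ℝ E)⁻¹ • g (s, s⁻¹ • (x - y))) ∂μ := by
        simp only [bogovskiiField, g, smul_bogovskiiKernel]
    _ = ∫ p, g p ∂((volume.restrict (Ioo (0 : ℝ) 1)).prod μ) :=
        integral_integral_inv_pow_smul_comp
          ((ae_restrict_mem measurableSet_Ioo).mono fun _ hs => hs.1) hg.stronglyMeasurable hint x
    _ = ∫ p in Icc (0 : ℝ) 1 ×ˢ S, g p ∂(volume.prod μ) := by
        rw [hrestrict]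
        exact setIntegral_eq_of_subset_of_forall_sdiff_eq_zero (measurableSet_Icc.prod .univ)
          (prod_mono_right (subset_univ S)) fun p hp => hgzero p hp.1 hp.2

theorem bogovskii_smooth_solution_general {k : ℕ∞} (hk : k ≠ 0)
    (hΩ : ∀ z ∈ B, StarConvex ℝ z Ω)
    (hω : ContDiff ℝ k ω) (hωc : HasCompactSupport ω) (hωB : Function.support ω ⊆ B)
    (hf : ContDiff ℝ k f) (hfc : HasCompactSupport f) (hfΩ : Function.support f ⊆ Ω) :
    ContDiff ℝ k (bogovskiiField μ ω f) ∧
    (∀ x, x ∉ Ω → bogovskiiField μ ω f x = 0) ∧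
    (∀ x, LinearMap.trace ℝ E (fderiv ℝ (bogovskiiField μ ω f) x) =
      (∫ z, ω z ∂μ) * f x - (∫ z, f z ∂μ) * ω x) := by
  have hS : IsCompact (tsupport ω - tsupport f) := by
    simpa only [sub_image_prod] using (IsCompact.prod hωc hfc).image continuous_sub
  have hzero : ∀ w ∉ tsupport ω - tsupport f, ∀ z, f z * ω (z + w) = 0 := fun _ =>
    mul_comp_add_eq_zero_of_notMem_tsupport_sub
  have hdensity : ContDiff ℝ k (Function.uncurry fun w z => f z * ω (z + w)) :=
    (hf.comp contDiff_snd).mul (hω.comp (contDiff_snd.add contDiff_fst))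
  refine ⟨?_, fun x hx => bogovskiiField_eq_zero_of_notMem hΩ hωB hfΩ hx, fun x => ?_⟩ <;>
    rw [bogovskiiField_eq_segmentField hω.continuous hf.continuous hS hzero]
  · exact contDiff_segmentField hS hdensity
  · rw [trace_fderiv_segmentField hS (hdensity.of_le (mod_cast Order.one_le_iff_ne_zero.2 hk)),
      setIntegral_eq_integral_of_forall_compl_eq_zero fun w hw => by
        rw [hzero w hw, hzero w hw, sub_zero]]
    exact integral_mul_comp_add_sub (hω.continuous.integrable_of_hasCompactSupport hωc)
      (hf.continuous.integrable_of_hasCompactSupport hfc) x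

end Bogovskii

theorem trace_eq_sum_apply_single {𝕜 ι : Type*} [RCLike 𝕜] [Fintype ι] [DecidableEq ι]
    (A : EuclideanSpace 𝕜 ι →ₗ[𝕜] EuclideanSpace 𝕜 ι) :
    LinearMap.trace 𝕜 _ A = ∑ i, A (EuclideanSpace.single i 1) i := by
  simp only [A.trace_eq_sum_inner (EuclideanSpace.basisFun ι 𝕜), EuclideanSpace.basisFun_apply,
    EuclideanSpace.inner_single_left, map_one, one_mul]

/-- For a smooth compactly supported `f` with support in `Ω` and zero
integral, the Bogovskiĭ field `u` is `C¹` on `ℝⁿ`, vanishes outside the closure of `Ω`,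
and satisfies `div u = f` everywhere. -/
theorem bogovskii_smooth_solution
    (n : ℕ) (hn : 2 ≤ n)
    (Ω B : Set (EuclideanSpace ℝ (Fin n)))
    (hΩo : IsOpen Ω) (hΩb : Bornology.IsBounded Ω)
    (hBball : ∃ c r, 0 < r ∧ B = Metric.ball c r)
    (hBΩ : B ⊆ Ω)
    (hstar : ∀ x ∈ Ω, ∀ y ∈ B, segment ℝ x y ⊆ Ω)
    (ω : EuclideanSpace ℝ (Fin n) → ℝ)
    (hω : ContDiff ℝ (⊤ : ℕ∞) ω) (hωc : HasCompactSupport ω)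
    (hωsupp : tsupport ω ⊆ B) (hωint : ∫ x, ω x = 1)
    (f : EuclideanSpace ℝ (Fin n) → ℝ)
    (hf : ContDiff ℝ (⊤ : ℕ∞) f) (hfc : HasCompactSupport f)
    (hfsupp : tsupport f ⊆ Ω) (hfint : ∫ x, f x = 0)
    (G : EuclideanSpace ℝ (Fin n) → EuclideanSpace ℝ (Fin n) → EuclideanSpace ℝ (Fin n))
    (hG : ∀ x y, x ≠ y → G x y =
      ∫ s in Set.Ioo (0:ℝ) 1, ((s ^ n)⁻¹ * ω (y + s⁻¹ • (x - y))) • (s⁻¹ • (x - y)))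
    (hGdiag : ∀ x, G x x = 0)
    (u : EuclideanSpace ℝ (Fin n) → EuclideanSpace ℝ (Fin n))
    (hu : ∀ x, u x = ∫ y in Ω, f y • G x y) :
    ContDiff ℝ 1 u ∧
    (∀ x, x ∉ closure Ω → u x = 0) ∧
    (∀ x, ∑ i, fderiv ℝ u x (EuclideanSpace.single i 1) i = f x) := by
  have hfΩ := (subset_tsupport f).trans hfsupp
  obtain rfl : u = bogovskiiField volume ω f := funext fun x => (hu x).trans <|
    setIntegral_smul_eq_bogovskiiField hfΩ
      (by simpa only [bogovskiiKernel, finrank_euclideanSpace_fin] using hG) hGdiag x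
  obtain ⟨hsmooth, hzero, hdiv⟩ := bogovskii_smooth_solution_general
    (μ := volume) (k := ⊤) ENat.top_ne_zero
    (fun y hy => starConvex_iff_segment_subset.2 fun x hx =>
      segment_symm ℝ x y ▸ hstar x hx y hy)
    hω hωc ((subset_tsupport ω).trans hωsupp) hf hfc hfΩ
  refine ⟨hsmooth.of_le (mod_cast le_top), fun x hx => hzero x (mt (@subset_closure _ _ Ω x) hx),
    fun x => ?_⟩
  simpa only [trace_eq_sum_apply_single, ContinuousLinearMap.coe_coe, hωint, hfint, one_mul,
    zero_mul, sub_zero] using hdiv x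
end

section
/- There exists a constant C (depending only on n, Ω, ω, χ) such that for all x, y ∈ ℝⁿ with x ≠ y one has |N(x,y)| ≤ C · min(|x−y|^{−n}, |x−y|^{−(n+1)}); moreover N(x,y) = 0 whenever |x−y| ≥ d. -/
open MeasureTheory Metric Set Filter Topology

/-!
If `χ y ≠ 0` then `y` lies in the bounded set `U` carrying `ω`, so `∂η/∂z (y, ·)` is bounded and
vanishes outside the ball of radius `R = diam U`. In the integral defining `K y z` only the
`s ≥ ‖z‖ / R` contribute, and `∫_{‖z‖/R}^∞ s^{-(n+1)} ds = (R / ‖z‖)^n / n` gives the bound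
`|K y z| ≲ ‖z‖^{-n}`. As `N x y` vanishes unless `x` and `y` both lie in `U`, only `‖x - y‖ < R`
matters (in an open set every distance is strictly below the diameter), and there `‖x - y‖^{-n}`
is at most `max 1 R` times either of the two powers.
-/

section NormedSpace

open Function (support)

variable {E : Type*} [NormedAddCommGroup E] [NormedSpace ℝ E]

theorem dist_lt_diam_of_isOpen {U : Set E} (hU : IsOpen U) (hUb : Bornology.IsBounded U)
    {x y : E} (hx : x ∈ U) (hy : y ∈ U) (hxy : x ≠ y) : dist x y < diam U := by
  have hline : Tendsto (AffineMap.lineMap y x : ℝ → E) (𝓝[>] 1) (𝓝 x) := by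
    simpa only [AffineMap.lineMap_apply_one] using
      ((AffineMap.lineMap_continuous (p := y) (q := x)).tendsto (1 : ℝ)).mono_left
        nhdsWithin_le_nhds
  obtain ⟨t, htU, ht⟩ : ∃ t : ℝ, AffineMap.lineMap y x t ∈ U ∧ 1 < t :=
    ((hline.eventually (hU.mem_nhds hx)).and self_mem_nhdsWithin).exists
  calc
    dist x y < t * dist x y := lt_mul_of_one_lt_left (dist_pos.2 hxy) ht
    _ = dist (AffineMap.lineMap y x t) y := by
      rw [dist_lineMap_left, Real.norm_of_nonneg (by linarith), dist_comm]
    _ ≤ diam U := dist_le_diam_of_mem hUb htU hy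

theorem inv_pow_le_max_mul_min_inv_pow {𝕜 : Type*} [Field 𝕜] [LinearOrder 𝕜]
    [IsStrictOrderedRing 𝕜] {r R : 𝕜} (hr : 0 < r) (hrR : r ≤ R) (n : ℕ) :
    (r ^ n)⁻¹ ≤ max 1 R * min (r ^ n)⁻¹ (r ^ (n + 1))⁻¹ := by
  rw [mul_min_of_nonneg _ _ (zero_le_one.trans (le_max_left 1 R)), le_min_iff]
  constructor
  · exact le_mul_of_one_le_left (by positivity) (le_max_left 1 R)
  · calc
      (r ^ n)⁻¹ = r * (r ^ (n + 1))⁻¹ := by rw [pow_succ]; field_simp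
      _ ≤ max 1 R * (r ^ (n + 1))⁻¹ := by gcongr; exact hrR.trans (le_max_right 1 R)

section ScaledIntegral

theorem inv_pow_succ_eq_rpow {s : ℝ} (hs : 0 ≤ s) (n : ℕ) :
    (s ^ (n + 1))⁻¹ = s ^ (-(n + 1 : ℝ)) := by
  rw [Real.rpow_neg hs, ← Nat.cast_add_one, Real.rpow_natCast]

theorem integrableOn_Ioi_inv_pow_succ {n : ℕ} (hn : n ≠ 0) {a : ℝ} (ha : 0 < a) :
    IntegrableOn (fun s : ℝ => (s ^ (n + 1))⁻¹) (Ioi a) := by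
  have hexp : -(n + 1 : ℝ) < -1 := by simpa using Nat.pos_of_ne_zero hn
  exact (integrableOn_Ioi_rpow_of_lt hexp ha).congr_fun
    (fun s hs => (inv_pow_succ_eq_rpow (ha.trans hs).le n).symm) measurableSet_Ioi

theorem integral_Ioi_inv_pow_succ {n : ℕ} (hn : n ≠ 0) {a : ℝ} (ha : 0 < a) :
    ∫ s in Ioi a, (s ^ (n + 1))⁻¹ = (n * a ^ n)⁻¹ := by
  have hexp : -(n + 1 : ℝ) < -1 := by simpa using Nat.pos_of_ne_zero hn
  rw [setIntegral_congr_fun measurableSet_Ioi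
      fun s hs => inv_pow_succ_eq_rpow (ha.trans hs).le n,
    integral_Ioi_rpow_of_lt hexp ha, neg_add_rev, neg_add_cancel_comm, Real.rpow_neg ha.le,
    Real.rpow_natCast]
  field_simp

theorem norm_integral_Ioo_inv_pow_succ_smul_le {F : Type*} [NormedAddCommGroup F]
    [NormedSpace ℝ F] {n : ℕ} (hn : n ≠ 0) {f : E → F} {M R : ℝ} (hR : 0 < R)
    (hM : ∀ z, ‖f z‖ ≤ M) (hf : ∀ z, R < ‖z‖ → f z = 0) {z : E} (hz : z ≠ 0) :
    ‖∫ s in Ioo (0 : ℝ) 1, (s ^ (n + 1))⁻¹ • f (s⁻¹ • z)‖ ≤ M * (R ^ n / n) * (‖z‖ ^ n)⁻¹ := by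
  have ha : 0 < ‖z‖ / R := div_pos (norm_pos_iff.2 hz) hR
  have hint : IntegrableOn (fun s : ℝ => M * (s ^ (n + 1))⁻¹) (Ici (‖z‖ / R)) :=
    (integrableOn_Ici_iff_integrableOn_Ioi enorm_ne_top).2 <|
      (integrableOn_Ioi_inv_pow_succ hn ha).const_mul M
  have hvanish : ∀ s ∈ Ioo (0 : ℝ) 1 \ (Ioo 0 1 ∩ Ici (‖z‖ / R)),
      (s ^ (n + 1))⁻¹ • f (s⁻¹ • z) = 0 := by
    rintro s ⟨hs, hsR⟩
    have hsR : s < ‖z‖ / R := not_le.1 fun h => hsR ⟨hs, h⟩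
    rw [hf, smul_zero]
    rwa [norm_smul_of_nonneg (inv_nonneg.2 hs.1.le), inv_mul_eq_div, lt_div_comm₀ hR hs.1]
  have hbound : ∀ s ∈ Ici (‖z‖ / R), ‖(s ^ (n + 1))⁻¹ • f (s⁻¹ • z)‖ ≤ M * (s ^ (n + 1))⁻¹ := by
    intro s hs
    have hs0 : 0 < s := ha.trans_le hs
    rw [norm_smul_of_nonneg (by positivity), mul_comm]
    exact mul_le_mul_of_nonneg_right (hM _) (by positivity)
  calc
    ‖∫ s in Ioo (0 : ℝ) 1, (s ^ (n + 1))⁻¹ • f (s⁻¹ • z)‖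
    _ = ‖∫ s in Ioo 0 1 ∩ Ici (‖z‖ / R), (s ^ (n + 1))⁻¹ • f (s⁻¹ • z)‖ := by
      rw [setIntegral_eq_of_subset_of_forall_sdiff_eq_zero measurableSet_Ioo inter_subset_left
        hvanish]
    _ ≤ ∫ s in Ioo 0 1 ∩ Ici (‖z‖ / R), M * (s ^ (n + 1))⁻¹ :=
      norm_integral_le_of_norm_le (hint.mono_set inter_subset_right) <|
        ae_restrict_of_forall_mem (measurableSet_Ioo.inter measurableSet_Ici)
          fun s hs => hbound s hs.2
    _ ≤ ∫ s in Ici (‖z‖ / R), M * (s ^ (n + 1))⁻¹ :=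
      setIntegral_mono_set hint
        (ae_restrict_of_forall_mem measurableSet_Ici
          fun s hs => (norm_nonneg _).trans (hbound s hs))
        inter_subset_right.eventuallyLE
    _ = M * (R ^ n / n) * (‖z‖ ^ n)⁻¹ := by
      rw [integral_Ici_eq_integral_Ioi, integral_const_mul, integral_Ioi_inv_pow_succ hn ha,
        div_pow]
      field_simp

end ScaledIntegral

section Translate

variable {F : Type*} [NormedAddCommGroup F] [NormedSpace ℝ F] {f : E → F}

theorem fderiv_clm_smul_comp_add_left (ℓ : E →L[ℝ] ℝ) (v : E) {y z : E}
    (hf : DifferentiableAt ℝ f (y + z)) :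
    fderiv ℝ (fun w => ℓ w • f (y + w)) z v = ℓ z • fderiv ℝ f (y + z) v + ℓ v • f (y + z) := by
  rw [fderiv_fun_smul ℓ.differentiableAt ((differentiableAt_comp_add_left y).2 hf),
    fderiv_comp_add_left, ℓ.fderiv]
  rfl

theorem fderiv_clm_smul_comp_add_left_eq_zero {U : Set E} (hU : Bornology.IsBounded U)
    (hfU : support f ⊆ U) (ℓ : E →L[ℝ] ℝ) (v : E) {y z : E} (hy : y ∈ U)
    (hz : diam U < ‖z‖) : fderiv ℝ (fun w => ℓ w • f (y + w)) z v = 0 := by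
  have hyz : y + z ∉ tsupport f := fun h => hz.not_ge <|
    calc
      ‖z‖ = dist (y + z) y := by simp
      _ ≤ diam (closure U) :=
        dist_le_diam_of_mem hU.closure (closure_mono hfU h) (subset_closure hy)
      _ = diam U := diam_closure U
  have hf : DifferentiableAt ℝ f (y + z) :=
    (differentiableAt_const 0).congr_of_eventuallyEq (notMem_tsupport_iff_eventuallyEq.1 hyz)
  rw [fderiv_clm_smul_comp_add_left ℓ v hf, fderiv_of_notMem_tsupport ℝ hyz,
    image_eq_zero_of_notMem_tsupport hyz]
  simp

theorem norm_fderiv_clm_smul_comp_add_left_le (ℓ : E →L[ℝ] ℝ) (v : E) {y z : E} {a b : ℝ}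
    (hf : DifferentiableAt ℝ f (y + z)) (ha : ‖f (y + z)‖ ≤ a)
    (hb : ‖fderiv ℝ f (y + z)‖ ≤ b) :
    ‖fderiv ℝ (fun w => ℓ w • f (y + w)) z v‖ ≤ ‖ℓ‖ * ‖v‖ * (b * ‖z‖ + a) := by
  have : 0 ≤ b := (norm_nonneg _).trans hb
  calc
    ‖fderiv ℝ (fun w => ℓ w • f (y + w)) z v‖
    _ ≤ ‖ℓ z‖ * ‖fderiv ℝ f (y + z) v‖ + ‖ℓ v‖ * ‖f (y + z)‖ := by
      rw [fderiv_clm_smul_comp_add_left ℓ v hf, ← norm_smul, ← norm_smul]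
      exact norm_add_le _ _
    _ ≤ ‖ℓ‖ * ‖z‖ * (b * ‖v‖) + ‖ℓ‖ * ‖v‖ * a := by
      gcongr
      · exact ℓ.le_opNorm z
      · exact (fderiv ℝ f (y + z)).le_of_opNorm_le hb v
      · exact ℓ.le_opNorm v
    _ = ‖ℓ‖ * ‖v‖ * (b * ‖z‖ + a) := by ring

end Translate

theorem kernel_K_size_bound {n : ℕ} (hn : n ≠ 0) {U : Set E} (hU : Bornology.IsBounded U)
    (hdiam : 0 < diam U) {ω : E → ℝ} (hω : Differentiable ℝ ω) {a b : ℝ} (ha : ∀ x, ‖ω x‖ ≤ a)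
    (hb : ∀ x, ‖fderiv ℝ ω x‖ ≤ b) (hωU : support ω ⊆ U) (ℓ : E →L[ℝ] ℝ) (v : E) {k A : ℝ}
    (hk : ‖k‖ ≤ A) {y z : E} (hy : y ∈ U) (hz : z ≠ 0) :
    ‖∫ s in Ioo (0 : ℝ) 1,
        k * fderiv ℝ (fun w => ℓ w * ω (y + w)) (s⁻¹ • z) v * (s ^ (n + 1))⁻¹‖ ≤
      A * (‖ℓ‖ * ‖v‖ * (b * diam U + a)) * (diam U ^ n / n) * (‖z‖ ^ n)⁻¹ := by
  have hb0 : 0 ≤ b := (norm_nonneg _).trans (hb 0)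
  have ha0 : 0 ≤ a := (norm_nonneg _).trans (ha 0)
  have hA0 : 0 ≤ A := (norm_nonneg k).trans hk
  have hvanish : ∀ z, diam U < ‖z‖ → k * fderiv ℝ (fun w => ℓ w * ω (y + w)) z v = 0 :=
    fun z hz => mul_eq_zero_of_right k <|
      fderiv_clm_smul_comp_add_left_eq_zero hU hωU ℓ v hy hz
  have hbound : ∀ z, ‖k * fderiv ℝ (fun w => ℓ w * ω (y + w)) z v‖ ≤
      A * (‖ℓ‖ * ‖v‖ * (b * diam U + a)) := by
    intro z
    rcases le_or_gt ‖z‖ (diam U) with hz | hz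
    · rw [norm_mul]
      gcongr
      exact (norm_fderiv_clm_smul_comp_add_left_le ℓ v (hω _) (ha _) (hb _)).trans (by gcongr)
    · rw [hvanish z hz, norm_zero]
      positivity
  simpa only [smul_eq_mul, mul_comm] using
    norm_integral_Ioo_inv_pow_succ_smul_le hn hdiam hbound hvanish hz

theorem kernel_N_size_bound_general {n : ℕ} (hn : n ≠ 0) {U : Set E} (hUo : IsOpen U)
    (hUb : Bornology.IsBounded U) {ω : E → ℝ} (hω : Differentiable ℝ ω)
    (hωbdd : ∃ a, ∀ x, ‖ω x‖ ≤ a) (hDωbdd : ∃ b, ∀ x, ‖fderiv ℝ ω x‖ ≤ b) (hωU : support ω ⊆ U)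
    {χ : E → ℝ} (hχbdd : ∃ A, ∀ x, ‖χ x‖ ≤ A) (hχU : support χ ⊆ U) (ℓ : E →L[ℝ] ℝ) (v : E)
    {Dη : E → E → ℝ} (hDη : ∀ y z, Dη y z = fderiv ℝ (fun w => ℓ w * ω (y + w)) z v)
    {K : E → E → ℝ}
    (hK : ∀ y z, z ≠ 0 →
      K y z = ∫ s in Ioo (0 : ℝ) 1, χ y * Dη y (s⁻¹ • z) * (s ^ (n + 1))⁻¹)
    {N : E → E → ℝ} (hN : ∀ x y, x ≠ y → N x y = χ x * K y (x - y)) :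
    ∃ C : ℝ,
      (∀ x y, x ≠ y → |N x y| ≤ C * min (‖x - y‖ ^ n)⁻¹ (‖x - y‖ ^ (n + 1))⁻¹) ∧
      (∀ x y, x ≠ y → diam U ≤ ‖x - y‖ → N x y = 0) := by
  obtain ⟨a, ha⟩ := hωbdd
  obtain ⟨b, hb⟩ := hDωbdd
  obtain ⟨A, hA⟩ := hχbdd
  have hvanish : ∀ x y, x ≠ y → x ∉ U ∨ y ∉ U → N x y = 0 := by
    intro x y hxy h
    rw [hN x y hxy, hK y _ (sub_ne_zero.2 hxy)]
    rcases h with hx | hy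
    · rw [Function.notMem_support.1 fun h => hx (hχU h), zero_mul]
    · simp [Function.notMem_support.1 fun h => hy (hχU h)]
  have hlt : ∀ x ∈ U, ∀ y ∈ U, x ≠ y → ‖x - y‖ < diam U := fun x hx y hy hxy =>
    dist_eq_norm x y ▸ dist_lt_diam_of_isOpen hUo hUb hx hy hxy
  have hA0 : 0 ≤ A := (norm_nonneg _).trans (hA 0)
  have ha0 : 0 ≤ a := (norm_nonneg _).trans (ha 0)
  have hb0 : 0 ≤ b := (norm_nonneg _).trans (hb 0)
  set B : ℝ := A * (‖ℓ‖ * ‖v‖ * (b * diam U + a)) * (diam U ^ n / n)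
  have hB0 : 0 ≤ B := by positivity
  have hKB : ∀ x ∈ U, ∀ y ∈ U, x ≠ y → |K y (x - y)| ≤ B * (‖x - y‖ ^ n)⁻¹ := by
    intro x hx y hy hxy
    have hz := sub_ne_zero.2 hxy
    simp only [hK y _ hz, hDη]
    exact kernel_K_size_bound hn hUb ((norm_nonneg _).trans_lt (hlt x hx y hy hxy)) hω ha hb hωU
      ℓ v (hA y) hy hz
  refine ⟨A * B * max 1 (diam U), fun x y hxy => ?_, fun x y hxy hd => ?_⟩
  · by_cases hU : x ∈ U ∧ y ∈ U
    · rw [hN x y hxy, abs_mul, mul_assoc (A * B), mul_assoc A]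
      gcongr
      · exact hA x
      · exact (hKB x hU.1 y hU.2 hxy).trans <| mul_le_mul_of_nonneg_left
          (inv_pow_le_max_mul_min_inv_pow (norm_pos_iff.2 (sub_ne_zero.2 hxy))
            (hlt x hU.1 y hU.2 hxy).le n) hB0
    · rw [hvanish x y hxy (not_and_or.1 hU), abs_zero]
      positivity
  · exact hvanish x y hxy <| not_and_or.1 fun hU => (hlt x hU.1 y hU.2 hxy).not_ge hd

end NormedSpace

/-- The kernel `N(x,y) = χ(x) K(y, x−y)` satisfies
`|N(x,y)| ≲ min(|x−y|^{−n}, |x−y|^{−(n+1)})`, and vanishes for `|x−y| ≥ d`. -/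
theorem kernel_N_size_bound
    (n : ℕ) (hn : 2 ≤ n)
    (Ω B : Set (EuclideanSpace ℝ (Fin n)))
    (hΩo : IsOpen Ω) (hΩb : Bornology.IsBounded Ω)
    (hBball : ∃ c r, 0 < r ∧ B = Metric.ball c r)
    (hBΩ : B ⊆ Ω)
    (hstar : ∀ x ∈ Ω, ∀ y ∈ B, segment ℝ x y ⊆ Ω)
    (ω : EuclideanSpace ℝ (Fin n) → ℝ)
    (hω : ContDiff ℝ (⊤ : ℕ∞) ω) (hωc : HasCompactSupport ω)
    (hωsupp : tsupport ω ⊆ B) (hωint : ∫ x, ω x = 1)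
    (Bt : Set (EuclideanSpace ℝ (Fin n)))
    (hBt : ∃ c r, 0 < r ∧ Bt = Metric.ball c r)
    (hΩBt : closure Ω ⊆ Bt)
    (d : ℝ) (hd : d = Metric.diam Bt)
    (χ : EuclideanSpace ℝ (Fin n) → ℝ)
    (hχ : ContDiff ℝ (⊤ : ℕ∞) χ) (hχc : HasCompactSupport χ)
    (hχsupp : tsupport χ ⊆ Bt) (hχ1 : ∀ x ∈ Ω, χ x = 1)
    (i j : Fin n)
    -- `∂η_i/∂z_j (y, z)` where `η_i (y, z) = z_i ω (y + z)`
    (Dη : EuclideanSpace ℝ (Fin n) → EuclideanSpace ℝ (Fin n) → ℝ)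
    (hDη : ∀ y z, Dη y z =
      fderiv ℝ (fun w : EuclideanSpace ℝ (Fin n) => w i * ω (y + w)) z (EuclideanSpace.single j 1))
    (K : EuclideanSpace ℝ (Fin n) → EuclideanSpace ℝ (Fin n) → ℝ)
    (hK : ∀ y z, z ≠ 0 → K y z =
      ∫ s in Set.Ioo (0:ℝ) 1, χ y * Dη y (s⁻¹ • z) * (s ^ (n + 1))⁻¹)
    (N : EuclideanSpace ℝ (Fin n) → EuclideanSpace ℝ (Fin n) → ℝ)
    (hN : ∀ x y, x ≠ y → N x y = χ x * K y (x - y)) :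
    ∃ C : ℝ,
      (∀ x y, x ≠ y →
        |N x y| ≤ C * min (‖x - y‖ ^ n)⁻¹ (‖x - y‖ ^ (n + 1))⁻¹) ∧
      (∀ x y, x ≠ y → d ≤ ‖x - y‖ → N x y = 0) := by
  obtain ⟨c, r, -, rfl⟩ := hBt
  exact hd ▸ kernel_N_size_bound_general (by omega) isOpen_ball isBounded_ball
    (hω.differentiable (by simp)) (hωc.exists_bound_of_continuous hω.continuous)
    ((hωc.fderiv ℝ).exists_bound_of_continuous (hω.continuous_fderiv (by simp)))
    ((subset_tsupport ω).trans <| hωsupp.trans <| hBΩ.trans <| subset_closure.trans hΩBt)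
    (hχc.exists_bound_of_continuous hχ.continuous) ((subset_tsupport χ).trans hχsupp)
    (EuclideanSpace.proj i) (EuclideanSpace.single j 1) hDη hK hN
end

section
/- For every y ∈ ℝⁿ, the function σ ↦ K₁(y,σ) = ∫₀^∞ χ(y) (∂η_i/∂z_j)(y, σ/s) s^{−(n+1)} ds has zero mean on the unit sphere: ∫_{S^{n−1}} K₁(y,σ) dσ = 0, where dσ is the surface measure on the unit sphere S^{n−1} ⊂ ℝⁿ. -/
open MeasureTheory Metric Set Filter Topology

/-!
The inversion `s = 1 / r` turns the radial weight `s ^ (-(n + 1))` into `r ^ (n - 1)`, the Jacobian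
of polar coordinates. The integral of `K₁(y, ·)` over the sphere is therefore `χ y` times the
integral over the whole space of a directional derivative of a compactly supported function, which
vanishes.
-/

section RadialIntegrals

variable {F : Type*} [NormedAddCommGroup F] [NormedSpace ℝ F]

theorem integral_volumeIoiPow (n : ℕ) (f : ℝ → F) :
    ∫ r, f r ∂Measure.volumeIoiPow n = ∫ r in Ioi (0 : ℝ), r ^ n • f r := by
  simp only [Measure.volumeIoiPow, ENNReal.ofReal]
  rw [integral_withDensity_eq_integral_smul (by fun_prop),
    integral_subtype_comap measurableSet_Ioi fun r : ℝ ↦ (r ^ n).toNNReal • f r]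
  refine setIntegral_congr_fun measurableSet_Ioi fun r (hr : 0 < r) ↦ ?_
  simp only [NNReal.smul_def, Real.coe_toNNReal _ (pow_nonneg hr.le n)]

theorem integral_Ioi_inv_pow_smul_comp_inv (n : ℕ) (f : ℝ → F) :
    ∫ s in Ioi (0 : ℝ), (s ^ (n + 2))⁻¹ • f s⁻¹ = ∫ r in Ioi (0 : ℝ), r ^ n • f r := by
  rw [← integral_comp_rpow_Ioi (fun r ↦ r ^ n • f r) (p := -1) (by norm_num)]
  refine setIntegral_congr_fun measurableSet_Ioi fun s (hs : 0 < s) ↦ ?_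
  have jacobian : s ^ (-1 - 1 : ℝ) = (s ^ 2)⁻¹ := by
    rw [show (-1 - 1 : ℝ) = -(2 : ℕ) by norm_num, Real.rpow_neg hs.le, Real.rpow_natCast]
  simp only [jacobian, Real.rpow_neg_one, abs_neg, abs_one, one_mul, smul_smul]
  rw [inv_pow, ← mul_inv, ← pow_add, add_comm 2 n]

end RadialIntegrals

theorem smul_homeomorphUnitSphereProd {E : Type*} [NormedAddCommGroup E] [NormedSpace ℝ E]
    (x : ({0}ᶜ : Set E)) :
    ((homeomorphUnitSphereProd E x).2 : ℝ) • ((homeomorphUnitSphereProd E x).1 : E) = x := by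
  rw [← homeomorphUnitSphereProd_symm_apply_coe, Homeomorph.symm_apply_apply]

theorem integrable_fderiv_apply_of_hasCompactSupport {E F : Type*}
    [NormedAddCommGroup E] [NormedSpace ℝ E] [MeasurableSpace E] [OpensMeasurableSpace E]
    [NormedAddCommGroup F] [NormedSpace ℝ F] (μ : Measure E) [IsFiniteMeasureOnCompacts μ]
    {g : E → F} (hg : ContDiff ℝ 1 g) (hgc : HasCompactSupport g) (v : E) :
    Integrable (fun x ↦ fderiv ℝ g x v) μ :=
  ((hg.continuous_fderiv one_ne_zero).clm_apply continuous_const).integrable_of_hasCompactSupport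
    (hgc.fderiv_apply ℝ v)

section HaarMeasure

open Module

variable {E : Type*} [NormedAddCommGroup E] [NormedSpace ℝ E] [FiniteDimensional ℝ E]
  [MeasurableSpace E] [BorelSpace E] (μ : Measure E) [μ.IsAddHaarMeasure]

theorem integrable_comp_polar {F : Type*} [NormedAddCommGroup F] {f : E → F}
    (hf : Integrable f μ) :
    Integrable (fun p : sphere (0 : E) 1 × Ioi (0 : ℝ) ↦ f ((p.2 : ℝ) • (p.1 : E)))
      (μ.toSphere.prod (.volumeIoiPow (finrank ℝ E - 1))) := by
  rw [← μ.measurePreserving_homeomorphUnitSphereProd.integrable_comp_emb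
    (Homeomorph.measurableEmbedding _)]
  simp only [Function.comp_def, smul_homeomorphUnitSphereProd]
  exact (integrableOn_iff_comap_subtypeVal (measurableSet_singleton 0).compl).1 hf.integrableOn

variable {F : Type*} [NormedAddCommGroup F] [NormedSpace ℝ F]

theorem integral_comp_polar [Nontrivial E] (f : E → F) :
    ∫ p : sphere (0 : E) 1 × Ioi (0 : ℝ), f ((p.2 : ℝ) • (p.1 : E))
      ∂μ.toSphere.prod (.volumeIoiPow (finrank ℝ E - 1)) = ∫ x, f x ∂μ := by
  rw [← μ.measurePreserving_homeomorphUnitSphereProd.integral_comp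
    (Homeomorph.measurableEmbedding _)]
  simp only [smul_homeomorphUnitSphereProd]
  rw [integral_subtype_comap (measurableSet_singleton _).compl f, restrict_compl_singleton]

theorem integral_toSphere_integral_pow_smul [Nontrivial E] {f : E → F} (hf : Integrable f μ) :
    ∫ σ : sphere (0 : E) 1, (∫ r in Ioi (0 : ℝ), r ^ (finrank ℝ E - 1) • f (r • (σ : E)))
      ∂μ.toSphere = ∫ x, f x ∂μ := by
  rw [← integral_comp_polar μ f, integral_prod _ (integrable_comp_polar μ hf)]
  congr 1 with σ
  exact (integral_volumeIoiPow _ fun r ↦ f (r • (σ : E))).symm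

theorem integral_toSphere_integral_inv_pow_smul [Nontrivial E] {f : E → F}
    (hf : Integrable f μ) :
    ∫ σ : sphere (0 : E) 1, (∫ s in Ioi (0 : ℝ), (s ^ (finrank ℝ E + 1))⁻¹ • f (s⁻¹ • (σ : E)))
      ∂μ.toSphere = ∫ x, f x ∂μ := by
  have hdim : finrank ℝ E + 1 = finrank ℝ E - 1 + 2 := by
    have := finrank_pos (R := ℝ) (M := E)
    omega
  rw [← integral_toSphere_integral_pow_smul μ hf, hdim]
  congr 1 with σ
  exact integral_Ioi_inv_pow_smul_comp_inv _ fun r ↦ f (r • (σ : E))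

theorem integral_fderiv_apply_eq_zero {g : E → F} (hg : Differentiable ℝ g)
    (hgi : Integrable g μ) {v : E} (hgv : Integrable (fun x ↦ fderiv ℝ g x v) μ) :
    ∫ x, fderiv ℝ g x v ∂μ = 0 := by
  simpa using integral_smul_fderiv_eq_neg_fderiv_smul_of_integrable (μ := μ)
    (f := fun _ : E ↦ (1 : ℝ)) (g := g) (v := v) (by simp) (by simpa using hgv)
    (by simpa using hgi) (fun _ _ ↦ by fun_prop) (fun x _ ↦ hg x)

theorem K1_zero_mean_on_sphere_general {η : E → ℝ} (hη : ContDiff ℝ 1 η)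
    (hηc : HasCompactSupport η) (v : E) (c : ℝ) :
    ∫ σ : sphere (0 : E) 1, (∫ s in Ioi (0 : ℝ),
      c * fderiv ℝ η (s⁻¹ • (σ : E)) v * (s ^ (finrank ℝ E + 1))⁻¹) ∂μ.toSphere = 0 := by
  rcases subsingleton_or_nontrivial E with hE | _
  · rw [μ.toSphere_eq_zero_iff.2 hE, integral_zero_measure]
  have hηv : Integrable (fun z ↦ fderiv ℝ η z v) μ :=
    integrable_fderiv_apply_of_hasCompactSupport μ hη hηc v
  calc
    _ = ∫ σ : sphere (0 : E) 1, (∫ s in Ioi (0 : ℝ), (s ^ (finrank ℝ E + 1))⁻¹ •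
          (c * fderiv ℝ η (s⁻¹ • (σ : E)) v)) ∂μ.toSphere := by simp only [smul_eq_mul, mul_comm]
    _ = ∫ z, c * fderiv ℝ η z v ∂μ :=
      integral_toSphere_integral_inv_pow_smul μ (hηv.const_mul c)
    _ = c * ∫ z, fderiv ℝ η z v ∂μ := integral_const_mul c _
    _ = 0 := by
      rw [integral_fderiv_apply_eq_zero μ (hη.differentiable one_ne_zero)
        (hη.continuous.integrable_of_hasCompactSupport hηc) hηv, mul_zero]

end HaarMeasure

/-- The kernel `K₁(y,σ) = ∫₀^∞ χ(y) (∂η_i/∂z_j)(y, σ/s) s^{−(n+1)} ds`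
has zero mean over the unit sphere (with its surface measure). -/
theorem K1_zero_mean_on_sphere
    (n : ℕ) (hn : 2 ≤ n)
    (Ω B : Set (EuclideanSpace ℝ (Fin n)))
    (hΩo : IsOpen Ω) (hΩb : Bornology.IsBounded Ω)
    (hBball : ∃ c r, 0 < r ∧ B = Metric.ball c r)
    (hBΩ : B ⊆ Ω)
    (hstar : ∀ x ∈ Ω, ∀ y ∈ B, segment ℝ x y ⊆ Ω)
    (ω : EuclideanSpace ℝ (Fin n) → ℝ)
    (hω : ContDiff ℝ (⊤ : ℕ∞) ω) (hωc : HasCompactSupport ω)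
    (hωsupp : tsupport ω ⊆ B) (hωint : ∫ x, ω x = 1)
    (Bt : Set (EuclideanSpace ℝ (Fin n)))
    (hBt : ∃ c r, 0 < r ∧ Bt = Metric.ball c r)
    (hΩBt : closure Ω ⊆ Bt)
    (d : ℝ) (hd : d = Metric.diam Bt)
    (χ : EuclideanSpace ℝ (Fin n) → ℝ)
    (hχ : ContDiff ℝ (⊤ : ℕ∞) χ) (hχc : HasCompactSupport χ)
    (hχsupp : tsupport χ ⊆ Bt) (hχ1 : ∀ x ∈ Ω, χ x = 1)
    (i j : Fin n)
    -- `∂η_i/∂z_j (y, z)` where `η_i (y, z) = z_i ω (y + z)`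
    (Dη : EuclideanSpace ℝ (Fin n) → EuclideanSpace ℝ (Fin n) → ℝ)
    (hDη : ∀ y z, Dη y z =
      fderiv ℝ (fun w : EuclideanSpace ℝ (Fin n) => w i * ω (y + w)) z (EuclideanSpace.single j 1))
    (K₁ : EuclideanSpace ℝ (Fin n) → EuclideanSpace ℝ (Fin n) → ℝ)
    (hK₁ : ∀ y z, K₁ y z =
      ∫ s in Set.Ioi (0:ℝ), χ y * Dη y (s⁻¹ • z) * (s ^ (n + 1))⁻¹) :
    ∀ y : EuclideanSpace ℝ (Fin n),
      ∫ σ : Metric.sphere (0 : EuclideanSpace ℝ (Fin n)) 1, K₁ y ↑σ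
        ∂((volume : Measure (EuclideanSpace ℝ (Fin n))).toSphere) = 0 := by
  intro y
  simpa only [hK₁, hDη, finrank_euclideanSpace_fin] using
    K1_zero_mean_on_sphere_general volume (η := fun w ↦ w i * ω (y + w))
      (by have hω₁ : ContDiff ℝ 1 ω := hω.of_le (by simp); fun_prop)
      (hωc.comp_homeomorph (Homeomorph.addLeft y)).mul_left (EuclideanSpace.single j 1) (χ y)
end

section
/- Define K₂(y,z) = ∫₁^∞ χ(y) (∂η_i/∂z_j)(y, z/s) s^{−(n+1)} ds. Then there is a constant C (depending only on n, ω, χ) such that |K₂(y,z)| ≤ C for all y, z ∈ ℝⁿ; moreover χ(x) K₂(y, x−y) = 0 whenever |x−y| > 2d. -/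
open MeasureTheory Metric Set Filter Topology

/-!
Since `ℓ w = ℓ (y + w) - ℓ y`, the function `w ↦ ℓ w * ω (y + w)` is a translate of `ℓ ω - ℓ(y) ω`.
Its derivative at `w`, multiplied by `χ y`, is therefore
`χ(y) ∂ᵥ(ℓω)(y + w) - χ(y) ℓ(y) ∂ᵥω(y + w)`, and each of the four factors is bounded: the growth
of `ℓ` is absorbed by `ω` in the first term and by `χ` in the second. Integrating this uniform bound
against `s ^ (-p)` with `p > 1` bounds the kernel. The kernel vanishes for `y` outside the support
of `χ`, so multiplying it by `χ x` leaves only pairs of points at distance at most the diameter of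
that support.
-/

section Integral

variable {E F : Type*} [AddCommGroup E] [Module ℝ E]
  [NormedAddCommGroup F] [NormedSpace ℝ F] {p : ℝ}

/-- The weighted integral `∫₁^∞ s^{-p} g(z/s) ds` of `g` over the segment from `z` to the origin,
the integral that defines `K₂`. The paper's exponent is `p = n + 1`. -/
noncomputable def radialTail (p : ℝ) (g : E → F) (z : E) : F :=
  ∫ s in Ioi (1 : ℝ), s ^ (-p) • g (s⁻¹ • z)

theorem norm_radialTail_le (hp : 1 < p) {g : E → F} {M : ℝ} (hg : ∀ z, ‖g z‖ ≤ M) (z : E) :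
    ‖radialTail p g z‖ ≤ M / (p - 1) := by
  have hp' : -p < -1 := neg_lt_neg hp
  have integral_bound : ∫ s in Ioi (1 : ℝ), s ^ (-p) * M = M / (p - 1) := by
    rw [integral_mul_const, integral_Ioi_rpow_of_lt hp' one_pos, Real.one_rpow,
      show -p + 1 = -(p - 1) by ring, neg_div_neg_eq, one_div_mul_eq_div]
  rw [← integral_bound]
  refine norm_integral_le_of_norm_le
    ((integrableOn_Ioi_rpow_of_lt hp' one_pos).mul_const M) ?_
  filter_upwards [ae_restrict_mem measurableSet_Ioi] with s hs
  have weight_nonneg : 0 ≤ s ^ (-p) := Real.rpow_nonneg (zero_le_one.trans hs.le) _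
  rw [norm_smul, Real.norm_of_nonneg weight_nonneg]
  exact mul_le_mul_of_nonneg_left (hg _) weight_nonneg

end Integral

section Support

variable {X R : Type*} [PseudoMetricSpace X] [Zero R]

theorem eq_zero_or_eq_zero_of_diam_support_lt_dist {f : X → R}
    (hf : Bornology.IsBounded (Function.support f)) {x y : X}
    (hxy : diam (Function.support f) < dist x y) : f x = 0 ∨ f y = 0 := by
  by_contra! h
  exact hxy.not_ge (dist_le_diam_of_mem hf h.1 h.2)

end Support

section Kernel

variable {E : Type*} [NormedAddCommGroup E] [NormedSpace ℝ E]
  {F : Type*} [NormedAddCommGroup F] [NormedSpace ℝ F] {ω χ : E → ℝ} {p : ℝ}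

theorem fderiv_mul_translate_apply (ℓ : E →L[ℝ] ℝ) {y z : E}
    (hω : DifferentiableAt ℝ ω (y + z)) (v : E) :
    fderiv ℝ (fun w ↦ ℓ w * ω (y + w)) z v =
      fderiv ℝ (fun u ↦ ℓ u * ω u) (y + z) v - ℓ y * fderiv ℝ ω (y + z) v := by
  have translate : (fun w ↦ ℓ w * ω (y + w)) =
      fun w ↦ (fun u ↦ ℓ u * ω u - ℓ y * ω u) (y + w) := by
    ext w
    simp only [map_add]
    ring
  rw [translate, fderiv_comp_add_left (f := fun u ↦ ℓ u * ω u - ℓ y * ω u),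
    fderiv_fun_sub (ℓ.differentiableAt.fun_mul hω) (hω.const_mul _), fderiv_const_mul hω,
    sub_apply, smul_apply, smul_eq_mul]

theorem exists_norm_fderiv_apply_le {f : E → F} (hf : ContDiff ℝ 1 f) (hfc : HasCompactSupport f)
    (v : E) : ∃ C, ∀ x, ‖fderiv ℝ f x v‖ ≤ C :=
  (hfc.fderiv_apply ℝ v).exists_bound_of_continuous
    ((hf.continuous_fderiv one_ne_zero).clm_apply continuous_const)

theorem exists_norm_smul_clm_apply_le (ℓ : E →L[ℝ] F) (hχ : Bornology.IsBounded (range χ))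
    (hχs : Bornology.IsBounded (Function.support χ)) : ∃ C, ∀ y, ‖χ y • ℓ y‖ ≤ C := by
  obtain ⟨X, hX⟩ := hχ.exists_norm_le
  obtain ⟨R, hR0, hR⟩ := hχs.exists_pos_norm_le
  have hX0 : 0 ≤ X := (norm_nonneg _).trans (hX _ (mem_range_self 0))
  refine ⟨X * (‖ℓ‖ * R), fun y ↦ ?_⟩
  by_cases hy : χ y = 0
  · rw [hy, zero_smul, norm_zero]
    positivity
  · rw [norm_smul]
    have hℓ : ‖ℓ y‖ ≤ ‖ℓ‖ * R := ℓ.le_opNorm_of_le (hR y hy)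
    exact mul_le_mul (hX _ (mem_range_self y)) hℓ (norm_nonneg _) hX0

/-- The kernel `K₂(y, z) = ∫₁^∞ χ(y) (∂ᵥη)(y, z/s) s^{-p} ds` with `η(y, z) = ℓ(z) ω(y + z)`, where
`∂ᵥ` acts on `z`. The paper's `η_i` and `∂/∂z_j` have for `ℓ` the `i`-th coordinate and for `v` the
`j`-th basis vector. -/
noncomputable def tailKernel (p : ℝ) (χ ω : E → ℝ) (ℓ : E →L[ℝ] ℝ) (v y z : E) : ℝ :=
  radialTail p (fun w ↦ χ y * fderiv ℝ (fun u ↦ ℓ u * ω (y + u)) w v) z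

theorem tailKernel_eq_zero {y : E} (hy : χ y = 0) (ω : E → ℝ) (ℓ : E →L[ℝ] ℝ) (v z : E) :
    tailKernel p χ ω ℓ v y z = 0 := by
  simp [tailKernel, radialTail, hy]

theorem abs_tailKernel_le (hp : 1 < p) (hω : Differentiable ℝ ω) {ℓ : E →L[ℝ] ℝ} {v : E}
    {X Y A D : ℝ} (hX : ∀ y, |χ y| ≤ X) (hY : ∀ y, |χ y * ℓ y| ≤ Y)
    (hA : ∀ u, |fderiv ℝ (fun u ↦ ℓ u * ω u) u v| ≤ A) (hD : ∀ u, |fderiv ℝ ω u v| ≤ D)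
    (y z : E) : |tailKernel p χ ω ℓ v y z| ≤ (X * A + Y * D) / (p - 1) := by
  rw [tailKernel, ← Real.norm_eq_abs]
  refine norm_radialTail_le hp (fun w ↦ ?_) z
  have hX0 : 0 ≤ X := (abs_nonneg _).trans (hX 0)
  have hY0 : 0 ≤ Y := (abs_nonneg _).trans (hY 0)
  calc |χ y * fderiv ℝ (fun u ↦ ℓ u * ω (y + u)) w v|
      = |χ y * fderiv ℝ (fun u ↦ ℓ u * ω u) (y + w) v - χ y * ℓ y * fderiv ℝ ω (y + w) v| := by
        rw [fderiv_mul_translate_apply ℓ (hω _), mul_sub, mul_assoc]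
    _ ≤ |χ y| * |fderiv ℝ (fun u ↦ ℓ u * ω u) (y + w) v|
        + |χ y * ℓ y| * |fderiv ℝ ω (y + w) v| := by
        rw [← abs_mul, ← abs_mul (χ y * ℓ y)]
        exact abs_sub _ _
    _ ≤ X * A + Y * D := by
        gcongr
        exacts [hX y, hA _, hY y, hD _]

theorem exists_abs_tailKernel_le (hp : 1 < p) (hω : ContDiff ℝ 1 ω) (hωc : HasCompactSupport ω)
    (hχ : Bornology.IsBounded (range χ)) (hχs : Bornology.IsBounded (Function.support χ))
    (ℓ : E →L[ℝ] ℝ) (v : E) : ∃ C, ∀ y z, |tailKernel p χ ω ℓ v y z| ≤ C := by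
  obtain ⟨X, hX⟩ := hχ.exists_norm_le
  obtain ⟨Y, hY⟩ := exists_norm_smul_clm_apply_le ℓ hχ hχs
  obtain ⟨A, hA⟩ := exists_norm_fderiv_apply_le (ℓ.contDiff.mul hω) hωc.mul_left v
  obtain ⟨D, hD⟩ := exists_norm_fderiv_apply_le hω hωc v
  exact ⟨_, abs_tailKernel_le hp (hω.differentiable one_ne_zero)
    (fun y ↦ hX _ (mem_range_self y)) hY hA hD⟩

theorem mul_tailKernel_eq_zero (hχs : Bornology.IsBounded (Function.support χ)) {x y : E}
    (hxy : diam (Function.support χ) < dist x y) (ω : E → ℝ) (ℓ : E →L[ℝ] ℝ) (v z : E) :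
    χ x * tailKernel p χ ω ℓ v y z = 0 := by
  rcases eq_zero_or_eq_zero_of_diam_support_lt_dist hχs hxy with hx | hy
  · rw [hx, zero_mul]
  · rw [tailKernel_eq_zero hy, mul_zero]

theorem K2_bounded_and_compactly_supported_general (hp : 1 < p) (hω : ContDiff ℝ 1 ω)
    (hωc : HasCompactSupport ω) (hχ : Bornology.IsBounded (range χ))
    (hχs : Bornology.IsBounded (Function.support χ)) (ℓ : E →L[ℝ] ℝ) (v : E) :
    ∃ C : ℝ,
      (∀ y z, |tailKernel p χ ω ℓ v y z| ≤ C) ∧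
      (∀ x y, diam (Function.support χ) < ‖x - y‖ →
        χ x * tailKernel p χ ω ℓ v y (x - y) = 0) := by
  obtain ⟨C, hC⟩ := exists_abs_tailKernel_le hp hω hωc hχ hχs ℓ v
  exact ⟨C, hC, fun x y hxy ↦
    mul_tailKernel_eq_zero hχs (hxy.trans_eq (dist_eq_norm x y).symm) ω ℓ v _⟩

end Kernel

/-- The kernel `K₂(y,z) = ∫₁^∞ χ(y) (∂η_i/∂z_j)(y, z/s) s^{−(n+1)} ds`
is uniformly bounded, and `χ(x) K₂(y, x−y) = 0` whenever `|x−y| > 2d`. -/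
theorem K2_bounded_and_compactly_supported
    (n : ℕ) (hn : 2 ≤ n)
    (Ω B : Set (EuclideanSpace ℝ (Fin n)))
    (hΩo : IsOpen Ω) (hΩb : Bornology.IsBounded Ω)
    (hBball : ∃ c r, 0 < r ∧ B = Metric.ball c r)
    (hBΩ : B ⊆ Ω)
    (hstar : ∀ x ∈ Ω, ∀ y ∈ B, segment ℝ x y ⊆ Ω)
    (ω : EuclideanSpace ℝ (Fin n) → ℝ)
    (hω : ContDiff ℝ (⊤ : ℕ∞) ω) (hωc : HasCompactSupport ω)
    (hωsupp : tsupport ω ⊆ B) (hωint : ∫ x, ω x = 1)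
    (Bt : Set (EuclideanSpace ℝ (Fin n)))
    (hBt : ∃ c r, 0 < r ∧ Bt = Metric.ball c r)
    (hΩBt : closure Ω ⊆ Bt)
    (d : ℝ) (hd : d = Metric.diam Bt)
    (χ : EuclideanSpace ℝ (Fin n) → ℝ)
    (hχ : ContDiff ℝ (⊤ : ℕ∞) χ) (hχc : HasCompactSupport χ)
    (hχsupp : tsupport χ ⊆ Bt) (hχ1 : ∀ x ∈ Ω, χ x = 1)
    (i j : Fin n)
    -- `∂η_i/∂z_j (y, z)` where `η_i (y, z) = z_i ω (y + z)`
    (Dη : EuclideanSpace ℝ (Fin n) → EuclideanSpace ℝ (Fin n) → ℝ)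
    (hDη : ∀ y z, Dη y z =
      fderiv ℝ (fun w : EuclideanSpace ℝ (Fin n) => w i * ω (y + w)) z (EuclideanSpace.single j 1))
    (K₂ : EuclideanSpace ℝ (Fin n) → EuclideanSpace ℝ (Fin n) → ℝ)
    (hK₂ : ∀ y z, K₂ y z =
      ∫ s in Set.Ioi (1:ℝ), χ y * Dη y (s⁻¹ • z) * (s ^ (n + 1))⁻¹) :
    ∃ C : ℝ,
      (∀ y z : EuclideanSpace ℝ (Fin n), |K₂ y z| ≤ C) ∧
      (∀ x y : EuclideanSpace ℝ (Fin n), 2 * d < ‖x - y‖ → χ x * K₂ y (x - y) = 0) := by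
  obtain ⟨c, r, -, rfl⟩ := hBt
  have hχBt : Function.support χ ⊆ ball c r := (subset_tsupport χ).trans hχsupp
  have hp : (1 : ℝ) < (n + 1 : ℕ) := by exact_mod_cast (by omega : 1 < n + 1)
  have hK : ∀ y z, K₂ y z = tailKernel (n + 1 : ℕ) χ ω (EuclideanSpace.proj i)
      (EuclideanSpace.single j 1) y z := fun y z ↦ by
    simp only [hK₂, hDη, tailKernel, radialTail, Real.rpow_neg_natCast, zpow_neg, zpow_natCast,
      smul_eq_mul, mul_comm _ (_ ^ (n + 1))⁻¹, PiLp.proj_apply]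
  have hdiam : diam (Function.support χ) ≤ 2 * d :=
    (hd ▸ diam_mono hχBt isBounded_ball).trans
      (le_mul_of_one_le_left (hd ▸ diam_nonneg) one_le_two)
  obtain ⟨C, hC, hzero⟩ := K2_bounded_and_compactly_supported_general hp
    (hω.of_le (by simp)) hωc (hχc.isCompact_range hχ.continuous).isBounded
    (isBounded_ball.subset hχBt) (EuclideanSpace.proj i) (EuclideanSpace.single j 1)
  simp only [hK]
  exact ⟨C, hC, fun x y hxy ↦ hzero x y (hdiam.trans_lt hxy)⟩
end

section
/- Define K₂(y,z) = ∫₁^∞ χ(y) (∂η_i/∂z_j)(y, z/s) s^{−(n+1)} ds and g₂(y) = ∫_{ℝⁿ} χ(x) K₂(y, x−y) dx. Then g₂ has compact support and g₂ is Lipschitz continuous on ℝⁿ, i.e. there is a constant L with |g₂(y) − g₂(ȳ)| ≤ L |y−ȳ| for all y, ȳ ∈ ℝⁿ. -/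
open MeasureTheory Metric Set Filter Topology

/-!
The function `G(y, z) = χ(y) ∂_jη_i(y, z)` is of class `C¹` and compactly supported in *both*
variables, because `χ(y)` confines `y` and `ω(y + z)` then confines `z`; so it is bounded and
globally Lipschitz. For `s ≥ 1` the map `(y, z) ↦ (y, z/s)` does not increase distances and
`s^{-(n+1)}` is integrable on `(1, ∞)`, so `K₂` is still bounded and Lipschitz. Finally
`y ↦ (y, x - y)` is nonexpansive for the sup norm on the product, so integrating against `χ`
keeps the Lipschitz bound. The support of `g₂` lies in the projection of the support of `G` to
the `y`-coordinate.
-/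

open scoped NNReal

theorem integrableOn_Ioi_inv_pow {m : ℕ} (hm : 1 < m) {c : ℝ} (hc : 0 < c) :
    IntegrableOn (fun s : ℝ => (s ^ m)⁻¹) (Ioi c) := by
  have hm' : -(m : ℝ) < -1 := neg_lt_neg (by exact_mod_cast hm)
  refine (integrableOn_Ioi_rpow_of_lt hm' hc).congr_fun (fun s hs => ?_) measurableSet_Ioi
  simp only [Real.rpow_neg (hc.trans hs).le, Real.rpow_natCast]

theorem lipschitzWith_integral {X α V : Type*} [PseudoMetricSpace X] [MeasurableSpace α]
    [NormedAddCommGroup V] [NormedSpace ℝ V] {μ : Measure α} {f : X → α → V} {C : α → ℝ≥0}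
    (hf : ∀ x, Integrable (f x) μ) (hC : Integrable (fun a => (C a : ℝ)) μ)
    (hfC : ∀ᵐ a ∂μ, LipschitzWith (C a) fun x => f x a) :
    LipschitzWith (∫ a, (C a : ℝ) ∂μ).toNNReal fun x => ∫ a, f x a ∂μ := by
  refine LipschitzWith.of_dist_le' fun x y => ?_
  rw [dist_eq_norm, ← integral_sub (hf x) (hf y), ← integral_mul_const]
  refine norm_integral_le_of_norm_le (hC.mul_const _) ?_
  filter_upwards [hfC] with a ha
  simpa only [dist_eq_norm] using ha.dist_le_mul x y

section Nonexpansive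

variable {X E : Type*} [PseudoEMetricSpace X] [SeminormedAddCommGroup E]

theorem lipschitzWith_one_prodMk_smul {𝕜 : Type*} [NormedField 𝕜] [NormedSpace 𝕜 E] {c : 𝕜}
    (hc : ‖c‖ ≤ 1) : LipschitzWith 1 fun p : X × E => (p.1, c • p.2) := by
  have hsnd : LipschitzWith 1 fun p : X × E => c • p.2 :=
    ((lipschitzWith_smul c).comp LipschitzWith.prod_snd).weaken
      (by simpa [← NNReal.coe_le_coe] using hc)
  simpa only [max_self] using LipschitzWith.prod_fst.prodMk hsnd

theorem lipschitzWith_one_prodMk_sub (x : E) : LipschitzWith 1 fun y : E => (y, x - y) := by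
  simpa only [max_self] using!
    LipschitzWith.id.prodMk (IsometryEquiv.subLeft x).isometry.lipschitz

end Nonexpansive

section DilationIntegral

variable {X F V : Type*} [NormedAddCommGroup F] [NormedSpace ℝ F]
  [NormedAddCommGroup V] [NormedSpace ℝ V] {w : ℝ → ℝ} {G : X × F → V} {M : ℝ}

/-- The integral `∫₁^∞ w(s) G(y, z/s) ds` of a kernel over the dilations of its second variable.
The kernel `K₂` is of this form, with `w(s) = s^{-(n+1)}`. -/
noncomputable def dilationIntegral (w : ℝ → ℝ) (G : X × F → V) (p : X × F) : V :=
  ∫ s in Ioi (1 : ℝ), w s • G (p.1, s⁻¹ • p.2)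

theorem norm_dilationIntegral_le (hw : IntegrableOn w (Ioi 1)) (hM : ∀ p, ‖G p‖ ≤ M)
    (p : X × F) : ‖dilationIntegral w G p‖ ≤ (∫ s in Ioi 1, ‖w s‖) * M := by
  rw [← integral_mul_const]
  refine norm_integral_le_of_norm_le (hw.norm.mul_const M) (.of_forall fun s => ?_)
  rw [norm_smul]
  gcongr
  exact hM _

theorem dilationIntegral_eq_zero [TopologicalSpace X] {y : X} (hy : y ∉ Prod.fst '' tsupport G)
    (z : F) : dilationIntegral w G (y, z) = 0 := by
  have hG (z : F) : G (y, z) = 0 := image_eq_zero_of_notMem_tsupport fun h => hy ⟨_, h, rfl⟩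
  simp [dilationIntegral, hG]

theorem integrableOn_smul_dilation [TopologicalSpace X] (hw : IntegrableOn w (Ioi 1))
    (hG : Continuous G) (hM : ∀ p, ‖G p‖ ≤ M) (p : X × F) :
    IntegrableOn (fun s => w s • G (p.1, s⁻¹ • p.2)) (Ioi 1) := by
  refine hw.smul_bdd M (ContinuousOn.aestronglyMeasurable ?_ measurableSet_Ioi)
    (.of_forall fun s => hM _)
  have hinv : ContinuousOn (fun s : ℝ => s⁻¹) (Ioi 1) :=
    continuousOn_inv₀.mono fun s hs => (zero_lt_one.trans hs).ne'
  exact hG.comp_continuousOn (continuousOn_const.prodMk (hinv.smul continuousOn_const))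

theorem exists_lipschitzWith_dilationIntegral [PseudoMetricSpace X] {C : ℝ≥0}
    (hw : IntegrableOn w (Ioi 1)) (hG : LipschitzWith C G) (hM : ∀ p, ‖G p‖ ≤ M) :
    ∃ L, LipschitzWith L (dilationIntegral w G) := by
  refine ⟨_, lipschitzWith_integral (C := fun s => ‖w s‖₊ * C)
    (integrableOn_smul_dilation hw hG.continuous hM) (by simpa using hw.norm.mul_const _) ?_⟩
  filter_upwards [ae_restrict_mem measurableSet_Ioi] with s (hs : 1 < s)
  have hs' : ‖s⁻¹‖ ≤ 1 := by
    rw [norm_inv, Real.norm_of_nonneg (zero_le_one.trans hs.le)]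
    exact inv_le_one_of_one_le₀ hs.le
  simpa only [mul_one] using!
    (lipschitzWith_smul (w s)).comp (hG.comp (lipschitzWith_one_prodMk_smul hs'))

end DilationIntegral

section DisplacementIntegral

variable {E V : Type*} [NormedAddCommGroup E] [MeasurableSpace E]
  [NormedAddCommGroup V] [NormedSpace ℝ V] {μ : Measure E} {θ : E → ℝ} {K : E × E → V}

/-- The integral `∫ θ(x) K(y, x - y) dμ(x)` of a density `θ` against a kernel `K` whose second
argument is the displacement from `y` to `x`. The function `g₂` is of this form. -/
noncomputable def displacementIntegral (μ : Measure E) (θ : E → ℝ) (K : E × E → V) (y : E) : V :=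
  ∫ x, θ x • K (y, x - y) ∂μ

theorem hasCompactSupport_displacementIntegral {S : Set E} (hS : IsCompact S)
    (hK : ∀ y ∉ S, ∀ z, K (y, z) = 0) : HasCompactSupport (displacementIntegral μ θ K) :=
  .intro hS fun y hy => by simp [displacementIntegral, hK y hy]

theorem exists_lipschitzWith_displacementIntegral [OpensMeasurableSpace E]
    [SecondCountableTopologyEither E V] {C : ℝ≥0} {M : ℝ}
    (hθ : Integrable θ μ) (hK : LipschitzWith C K) (hM : ∀ p, ‖K p‖ ≤ M) :
    ∃ L, LipschitzWith L (displacementIntegral μ θ K) := by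
  refine ⟨_, lipschitzWith_integral (C := fun x => ‖θ x‖₊ * C) (fun y => ?_)
    (by simpa using hθ.norm.mul_const _) (.of_forall fun x => ?_)⟩
  · have hcont : Continuous fun x => K (y, x - y) := hK.continuous.comp (by fun_prop)
    exact hθ.smul_bdd M hcont.aestronglyMeasurable (.of_forall fun x => hM _)
  · simpa only [mul_one] using!
      (lipschitzWith_smul (θ x)).comp (hK.comp (lipschitzWith_one_prodMk_sub x))

end DisplacementIntegral

section ProductSupport

theorem hasCompactSupport_fderiv_snd {𝕜 E F V : Type*} [NontriviallyNormedField 𝕜]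
    [TopologicalSpace E] [NormedAddCommGroup F] [NormedSpace 𝕜 F] [NormedAddCommGroup V]
    [NormedSpace 𝕜 V] {f : E × F → V} (hf : HasCompactSupport f) :
    HasCompactSupport fun p : E × F => fderiv 𝕜 (fun z => f (p.1, z)) p.2 := by
  refine hf.mono' fun p hp => ?_
  by_contra hpf
  have hf0 : f =ᶠ[𝓝 p] 0 := notMem_tsupport_iff_eventuallyEq.mp hpf
  have hz0 : (fun z => f (p.1, z)) =ᶠ[𝓝 p.2] 0 :=
    (Continuous.prodMk_right p.1).continuousAt.eventually hf0
  exact hp (by simp [hz0.fderiv_eq])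

theorem hasCompactSupport_mul_shear {E R : Type*} [TopologicalSpace E] [AddGroup E]
    [IsTopologicalAddGroup E] [MulZeroClass R] {χ ω : E → R} (hχ : HasCompactSupport χ)
    (hω : HasCompactSupport ω) : HasCompactSupport fun p : E × E => χ p.1 * ω (p.1 + p.2) := by
  have hprod : HasCompactSupport fun q : E × E => χ q.1 * ω q.2 := by
    refine .intro (hχ.isCompact.prod hω.isCompact) fun q hq => ?_
    rcases not_and_or.mp hq with h | h <;> simp [image_eq_zero_of_notMem_tsupport h]
  exact hprod.comp_homeomorph (Homeomorph.shearAddRight E)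

end ProductSupport

section CutoffMoment

variable {E : Type*} [NormedAddCommGroup E] [NormedSpace ℝ E] {χ ω : E → ℝ}

/-- The derivative `χ(y) ∂_v[ℓ(z) ω(y + z)]` in the variable `z` and the direction `v` of the
first moment of `ω` along the functional `ℓ`, cut off in `y`. With `ℓ` and `v` the `i`-th
coordinate and the `j`-th basis vector this is `χ(y) (∂η_i/∂z_j)(y, z)`. -/
noncomputable def cutoffMomentDeriv (χ ω : E → ℝ) (ℓ : E →L[ℝ] ℝ) (v : E) (p : E × E) : ℝ :=
  χ p.1 * fderiv ℝ (fun z => ℓ z * ω (p.1 + z)) p.2 v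

theorem contDiff_cutoffMomentDeriv (hχ : ContDiff ℝ 1 χ) (hω : ContDiff ℝ 2 ω)
    (ℓ : E →L[ℝ] ℝ) (v : E) : ContDiff ℝ 1 (cutoffMomentDeriv χ ω ℓ v) := by
  have hη : ContDiff ℝ 2 (Function.uncurry fun (p : E × E) z => ℓ z * ω (p.1 + z)) := by
    fun_prop
  exact (hχ.comp contDiff_fst).mul
    (hη.fderiv_apply contDiff_snd contDiff_const one_add_one_eq_two.le)

theorem hasCompactSupport_cutoffMomentDeriv (hχ : HasCompactSupport χ)
    (hω : HasCompactSupport ω) (ℓ : E →L[ℝ] ℝ) (v : E) :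
    HasCompactSupport (cutoffMomentDeriv χ ω ℓ v) := by
  have hη : HasCompactSupport fun p : E × E => ℓ p.2 * (χ p.1 * ω (p.1 + p.2)) :=
    (hasCompactSupport_mul_shear hχ hω).mul_left
  refine (hasCompactSupport_fderiv_snd (𝕜 := ℝ) hη).mono fun p hp hp0 => hp ?_
  have hD : χ p.1 • fderiv ℝ (fun z => ℓ z * ω (p.1 + z)) p.2 = 0 := by
    rw [← Pi.smul_apply, ← fderiv_const_smul_field]
    simpa only [Pi.smul_def, smul_eq_mul, mul_left_comm] using hp0
  exact DFunLike.congr_fun hD v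

end CutoffMoment

theorem g2_compact_support_and_lipschitz_general {E : Type*} [NormedAddCommGroup E]
    [NormedSpace ℝ E] [MeasurableSpace E] [OpensMeasurableSpace E] {μ : Measure E}
    {θ χ ω : E → ℝ} (hθ : Integrable θ μ) (hχ : ContDiff ℝ 1 χ) (hχc : HasCompactSupport χ)
    (hω : ContDiff ℝ 2 ω) (hωc : HasCompactSupport ω) (ℓ : E →L[ℝ] ℝ) (v : E)
    {w : ℝ → ℝ} (hw : IntegrableOn w (Ioi 1))
    {Dη K₂ : E → E → ℝ} {g₂ : E → ℝ}
    (hDη : ∀ y z, Dη y z = fderiv ℝ (fun u => ℓ u * ω (y + u)) z v)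
    (hK₂ : ∀ y z, K₂ y z = ∫ s in Ioi (1 : ℝ), χ y * Dη y (s⁻¹ • z) * w s)
    (hg₂ : ∀ y, g₂ y = ∫ x, θ x * K₂ y (x - y) ∂μ) :
    HasCompactSupport g₂ ∧ ∃ L, LipschitzWith L g₂ := by
  set G := cutoffMomentDeriv χ ω ℓ v with hGdef
  have hg : g₂ = displacementIntegral μ θ (dilationIntegral w G) := by
    funext y
    simp only [hg₂, hK₂, hDη, displacementIntegral, dilationIntegral, hGdef, cutoffMomentDeriv,
      smul_eq_mul, mul_comm (w _)]
  have hG : ContDiff ℝ 1 G := contDiff_cutoffMomentDeriv hχ hω ℓ v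
  have hGc : HasCompactSupport G := hasCompactSupport_cutoffMomentDeriv hχc hωc ℓ v
  obtain ⟨C, hC⟩ := hG.lipschitzWith_of_hasCompactSupport hGc one_ne_zero
  obtain ⟨M, hM⟩ := hGc.exists_bound_of_continuous hG.continuous
  obtain ⟨C', hC'⟩ := exists_lipschitzWith_dilationIntegral hw hC hM
  rw [hg]
  exact ⟨hasCompactSupport_displacementIntegral (hGc.isCompact.image continuous_fst)
      fun y hy => dilationIntegral_eq_zero hy,
    exists_lipschitzWith_displacementIntegral hθ hC' (norm_dilationIntegral_le hw hM)⟩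

/-- With `K₂(y,z) = ∫₁^∞ χ(y) (∂η_i/∂z_j)(y, z/s) s^{−(n+1)} ds`, the
function `g₂(y) = ∫ χ(x) K₂(y, x−y) dx` has compact support and is Lipschitz continuous. -/
theorem g2_compact_support_and_lipschitz
    (n : ℕ) (hn : 2 ≤ n)
    (Ω B : Set (EuclideanSpace ℝ (Fin n)))
    (hΩo : IsOpen Ω) (hΩb : Bornology.IsBounded Ω)
    (hBball : ∃ c r, 0 < r ∧ B = Metric.ball c r)
    (hBΩ : B ⊆ Ω)
    (hstar : ∀ x ∈ Ω, ∀ y ∈ B, segment ℝ x y ⊆ Ω)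
    (ω : EuclideanSpace ℝ (Fin n) → ℝ)
    (hω : ContDiff ℝ (⊤ : ℕ∞) ω) (hωc : HasCompactSupport ω)
    (hωsupp : tsupport ω ⊆ B) (hωint : ∫ x, ω x = 1)
    (Bt : Set (EuclideanSpace ℝ (Fin n)))
    (hBt : ∃ c r, 0 < r ∧ Bt = Metric.ball c r)
    (hΩBt : closure Ω ⊆ Bt)
    (d : ℝ) (hd : d = Metric.diam Bt)
    (χ : EuclideanSpace ℝ (Fin n) → ℝ)
    (hχ : ContDiff ℝ (⊤ : ℕ∞) χ) (hχc : HasCompactSupport χ)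
    (hχsupp : tsupport χ ⊆ Bt) (hχ1 : ∀ x ∈ Ω, χ x = 1)
    (i j : Fin n)
    -- `∂η_i/∂z_j (y, z)` where `η_i (y, z) = z_i ω (y + z)`
    (Dη : EuclideanSpace ℝ (Fin n) → EuclideanSpace ℝ (Fin n) → ℝ)
    (hDη : ∀ y z, Dη y z =
      fderiv ℝ (fun w : EuclideanSpace ℝ (Fin n) => w i * ω (y + w)) z (EuclideanSpace.single j 1))
    (K₂ : EuclideanSpace ℝ (Fin n) → EuclideanSpace ℝ (Fin n) → ℝ)
    (hK₂ : ∀ y z, K₂ y z =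
      ∫ s in Set.Ioi (1:ℝ), χ y * Dη y (s⁻¹ • z) * (s ^ (n + 1))⁻¹)
    (g₂ : EuclideanSpace ℝ (Fin n) → ℝ)
    (hg₂ : ∀ y, g₂ y = ∫ x, χ x * K₂ y (x - y)) :
    HasCompactSupport g₂ ∧
    ∃ L : ℝ, ∀ y y' : EuclideanSpace ℝ (Fin n), |g₂ y - g₂ y'| ≤ L * ‖y - y'‖ := by
  obtain ⟨hc, L, hL⟩ := g2_compact_support_and_lipschitz_general
    (hχ.continuous.integrable_of_hasCompactSupport hχc) (hχ.of_le (by norm_cast)) hχc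
    (hω.of_le (by norm_cast)) hωc (EuclideanSpace.proj i) (EuclideanSpace.single j 1)
    (integrableOn_Ioi_inv_pow (by omega) one_pos) hDη hK₂ hg₂
  exact ⟨hc, L, fun y y' => hL.norm_sub_le y y'⟩
end

section
/- For every y ∈ ℝⁿ the principal-value limit g(y) = lim_{ε→0⁺} ∫_{{x : |x−y|>ε}} χ(x) K(y, x−y) dx exists, and for every α with 0 < α < 1 there is a constant C (depending on α, n, Ω, ω, χ) such that |g(y) − g(ȳ)| ≤ C |y−ȳ|^α for all y, ȳ ∈ ℝⁿ, i.e. g belongs to the homogeneous Lipschitz space Λ̇_α(ℝⁿ). -/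
open MeasureTheory Metric Set Filter Topology

/-!
Integrate the scale `s` last: substituting `z = s w` turns `∫_{|z|>ε} χ(y + z) K(y, z) dz` into
`∫ φ_y(w) (∫_{0<s<1, s|w|>ε} χ(y + s w) ds / s) dw`, where `φ_y = χ(y) ∂η_i/∂z_j(y, ·)`. The
inner integral diverges like `-χ(y) log ε`. This divergence does not depend on `w`, and `φ_y` is
a derivative, so it has mean zero and annihilates it. What survives is the limit
`g(y) = ∫ φ_y(w) (∫₀¹ (χ(y + s w) - χ(y)) ds / s + χ(y) log |w|) dw`.
Since `log |w|` is locally integrable and both factors are bounded and Lipschitz in `y`, so is `g`,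
which is more than every Hölder condition of exponent `0 < α < 1`.
-/

/-- Bounded Lipschitz functions: one constant `C` dominates both `sup ‖f‖` and the Lipschitz
constant of `f`. Products, sums and integrals of such functions are of the same kind, and they
satisfy a Hölder condition for every exponent in `[0, 1]`. -/
structure BoundedLipschitzWith {X F : Type*} [PseudoMetricSpace X] [SeminormedAddCommGroup F]
    (C : ℝ) (f : X → F) : Prop where
  norm_le (x : X) : ‖f x‖ ≤ C
  norm_sub_le (x y : X) : ‖f x - f y‖ ≤ C * dist x y

namespace BoundedLipschitzWith

variable {X F : Type*} [PseudoMetricSpace X] [SeminormedAddCommGroup F] {A B C : ℝ}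

lemma add {f g : X → F} (hf : BoundedLipschitzWith A f) (hg : BoundedLipschitzWith B g) :
    BoundedLipschitzWith (A + B) (fun x => f x + g x) where
  norm_le x := norm_add_le_of_le (hf.norm_le x) (hg.norm_le x)
  norm_sub_le x y := by
    rw [add_sub_add_comm, add_mul]
    exact norm_add_le_of_le (hf.norm_sub_le x y) (hg.norm_sub_le x y)

lemma mul {R : Type*} [SeminormedRing R] {f g : X → R} (hf : BoundedLipschitzWith A f)
    (hg : BoundedLipschitzWith B g) : BoundedLipschitzWith (2 * (A * B)) (fun x => f x * g x) := by
  have norm_mul_le_mul (x y : X) : ‖f x * g y‖ ≤ A * B :=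
    norm_mul_le_of_le (hf.norm_le x) (hg.norm_le y)
  refine ⟨fun x => ?_, fun x y => ?_⟩
  · linarith [norm_mul_le_mul x x, norm_nonneg (f x * g x)]
  · calc ‖f x * g x - f y * g y‖ = ‖(f x - f y) * g x + f y * (g x - g y)‖ := by noncomm_ring
      _ ≤ A * dist x y * B + A * (B * dist x y) :=
        norm_add_le_of_le (norm_mul_le_of_le (hf.norm_sub_le x y) (hg.norm_le x))
          (norm_mul_le_of_le (hf.norm_le y) (hg.norm_sub_le x y))
      _ = 2 * (A * B) * dist x y := by ring

lemma const_mul {R : Type*} [SeminormedRing R] {f : X → R} (c : R)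
    (hf : BoundedLipschitzWith A f) : BoundedLipschitzWith (‖c‖ * A) (fun x => c * f x) where
  norm_le x := norm_mul_le_of_le le_rfl (hf.norm_le x)
  norm_sub_le x y := by
    rw [← mul_sub, mul_assoc]
    exact norm_mul_le_of_le le_rfl (hf.norm_sub_le x y)

lemma comp_isometry {Y : Type*} [PseudoMetricSpace Y] {f : X → F} {e : Y → X}
    (hf : BoundedLipschitzWith A f) (he : Isometry e) :
    BoundedLipschitzWith A (fun y => f (e y)) where
  norm_le y := hf.norm_le (e y)
  norm_sub_le y y' := by simpa only [he.dist_eq] using hf.norm_sub_le (e y) (e y')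

lemma integral {α G : Type*} [MeasurableSpace α] {μ : Measure α} [NormedAddCommGroup G]
    [NormedSpace ℝ G] {f : X → α → G} {b : α → ℝ}
    (hfm : ∀ x, AEStronglyMeasurable (f x) μ) (hb : Integrable b μ)
    (hfb : ∀ᵐ a ∂μ, BoundedLipschitzWith (b a) (fun x => f x a)) :
    BoundedLipschitzWith (∫ a, b a ∂μ) (fun x => ∫ a, f x a ∂μ) := by
  have hfi (x : X) : Integrable (f x) μ := hb.mono' (hfm x) (hfb.mono fun a ha => ha.norm_le x)
  refine ⟨fun x => norm_integral_le_of_norm_le hb (hfb.mono fun a ha => ha.norm_le x),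
    fun x y => ?_⟩
  rw [← integral_sub (hfi x) (hfi y), ← integral_mul_const]
  exact norm_integral_le_of_norm_le (hb.mul_const _) (hfb.mono fun a ha => ha.norm_sub_le x y)

lemma norm_sub_le_rpow {f : X → F} (hf : BoundedLipschitzWith C f) {α : ℝ} (hα₀ : 0 ≤ α)
    (hα₁ : α ≤ 1) (x y : X) : ‖f x - f y‖ ≤ 2 * C * dist x y ^ α := by
  have hC : 0 ≤ C := (norm_nonneg _).trans (hf.norm_le x)
  rcases le_total (dist x y) 1 with hxy | hxy
  · have := Real.self_le_rpow_of_le_one dist_nonneg hxy hα₁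
    calc ‖f x - f y‖ ≤ C * dist x y := hf.norm_sub_le x y
      _ ≤ 2 * C * dist x y ^ α := by gcongr; linarith
  · calc ‖f x - f y‖ ≤ C + C := norm_sub_le_of_le (hf.norm_le x) (hf.norm_le y)
      _ = 2 * C * 1 := by ring
      _ ≤ 2 * C * dist x y ^ α := by gcongr; exact Real.one_le_rpow hxy hα₀

lemma translate_sub {V W : Type*} [NormedAddCommGroup V] [NormedSpace ℝ V] [NormedAddCommGroup W]
    [NormedSpace ℝ W] {f : V → W} (hf : Differentiable ℝ f)
    (hf' : BoundedLipschitzWith C (fderiv ℝ f)) (h : V) :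
    BoundedLipschitzWith (C * ‖h‖) (fun x => f (x + h) - f x) := by
  refine ⟨fun x => ?_, fun x y => ?_⟩
  · simpa using convex_univ.norm_image_sub_le_of_norm_fderiv_le (fun z _ => hf z)
      (fun z _ => hf'.norm_le z) (mem_univ x) (mem_univ (x + h))
  · have hderiv (z : V) :
        HasFDerivAt (fun z => f (z + h) - f z) (fderiv ℝ f (z + h) - fderiv ℝ f z) z :=
      ((hasFDerivAt_comp_add_right h).2 (hf (z + h)).hasFDerivAt).sub (hf z).hasFDerivAt
    have hbound (z : V) : ‖fderiv ℝ f (z + h) - fderiv ℝ f z‖ ≤ C * ‖h‖ := by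
      simpa using hf'.norm_sub_le (z + h) z
    rw [dist_eq_norm]
    exact convex_univ.norm_image_sub_le_of_norm_hasFDerivWithin_le
      (fun z _ => (hderiv z).hasFDerivWithinAt) (fun z _ => hbound z) (mem_univ y) (mem_univ x)

lemma exists_of_contDiff {V W : Type*} [NormedAddCommGroup V] [NormedSpace ℝ V]
    [NormedAddCommGroup W] [NormedSpace ℝ W] {f : V → W} (hf : ContDiff ℝ 1 f)
    (hfc : HasCompactSupport f) : ∃ C, BoundedLipschitzWith C f := by
  obtain ⟨M, hM⟩ := hfc.exists_bound_of_continuous hf.continuous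
  obtain ⟨L, hL⟩ := hf.lipschitzWith_of_hasCompactSupport hfc one_ne_zero
  refine ⟨max M L, fun x => (hM x).trans (le_max_left _ _), fun x y => ?_⟩
  rw [← dist_eq_norm]
  exact (hL.dist_le_mul x y).trans (by gcongr; exact le_max_right _ _)

end BoundedLipschitzWith

lemma integral_inv_Ioo_inter_lt_mul {ε r : ℝ} (hε : 0 < ε) :
    ∫ s in Ioo (0 : ℝ) 1, {s | ε < s * r}.indicator (fun s => s⁻¹) s =
      Real.log (max r ε) - Real.log ε := by
  have hmax : 0 < max r ε := lt_max_of_lt_right hε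
  have hset : Ioo (0 : ℝ) 1 ∩ {s | ε < s * r} = Ioo (ε / max r ε) 1 := by
    ext s
    simp only [mem_inter_iff, mem_Ioo, mem_ofPred_eq, div_lt_iff₀ hmax]
    constructor
    · rintro ⟨⟨hs₀, hs₁⟩, hs⟩
      exact ⟨hs.trans_le (by gcongr; exact le_max_left _ _), hs₁⟩
    · rintro ⟨hs, hs₁⟩
      have hs₀ : 0 < s := pos_of_mul_pos_left (hε.trans hs) hmax.le
      rcases max_cases r ε with ⟨h, -⟩ | ⟨h, -⟩
      · exact ⟨⟨hs₀, hs₁⟩, h ▸ hs⟩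
      · rw [h] at hs; nlinarith
  have hle : ε / max r ε ≤ 1 := (div_le_one hmax).2 (le_max_right _ _)
  rw [setIntegral_indicator (measurableSet_lt (by fun_prop) (by fun_prop)), hset,
    ← integral_Ioc_eq_integral_Ioo, ← intervalIntegral.integral_of_le hle,
    integral_inv_of_pos (by positivity) one_pos, one_div_div, Real.log_div hmax.ne' hε.ne']

lemma abs_log_max_le {r ε : ℝ} (hr : 0 < r) (hε : 0 < ε) (hε₁ : ε ≤ 1) :
    |Real.log (max r ε)| ≤ |Real.log r| := by
  rcases le_total r ε with h | h
  · have hlog : Real.log r ≤ Real.log ε := Real.log_le_log hr h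
    rw [max_eq_right h]
    exact abs_le_abs_of_nonpos (Real.log_nonpos hε.le hε₁) hlog
  · rw [max_eq_left h]

section Haar

variable {E : Type*} [NormedAddCommGroup E] [NormedSpace ℝ E] [FiniteDimensional ℝ E]
  [MeasurableSpace E] [BorelSpace E] (μ : Measure E) [μ.IsAddHaarMeasure]

lemma locallyIntegrable_log_norm [Nontrivial E] :
    LocallyIntegrable (fun w : E => Real.log ‖w‖) μ := by
  intro x
  refine ⟨ball 0 (‖x‖ + 1), isOpen_ball.mem_nhds (by simp), ?_⟩
  rw [integrableOn_fun_norm_addHaar]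
  have hlog : IntegrableOn Real.log (Icc 0 (‖x‖ + 1)) := by
    rw [← intervalIntegrable_iff_integrableOn_Icc_of_le (by positivity)]
    exact intervalIntegral.intervalIntegrable_log'
  exact (hlog.continuousOn_mul (continuous_pow _).continuousOn isCompact_Icc).mono_set
    Ioo_subset_Icc_self

lemma aecover_lt_norm [Nontrivial E] : AECover μ (𝓝[>] (0 : ℝ)) (fun ε => {z : E | ε < ‖z‖}) where
  ae_eventually_mem := by
    filter_upwards [Measure.ae_ne μ 0] with z hz
    exact mem_nhdsWithin_of_mem_nhds (Iio_mem_nhds (norm_pos_iff.2 hz))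
  measurableSet ε := measurableSet_lt measurable_const measurable_norm

lemma integral_fderiv_apply_eq_zero_s8 {f : E → ℝ} (hf : ContDiff ℝ 1 f) (hfc : HasCompactSupport f)
    (v : E) : ∫ x, fderiv ℝ f x v ∂μ = 0 := by
  have hf' : Continuous fun x => fderiv ℝ f x v :=
    (hf.continuous_fderiv one_ne_zero).clm_apply continuous_const
  have hparts := integral_mul_fderiv_eq_neg_fderiv_mul_of_integrable (μ := μ) (v := v)
    (f := fun _ : E => (1 : ℝ)) (g := f) (by simp)
    (by simpa using hf'.integrable_of_hasCompactSupport (hfc.fderiv_apply ℝ v))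
    (by simpa using hf.continuous.integrable_of_hasCompactSupport hfc)
    (fun x _ => differentiableAt_const _) (fun x _ => hf.differentiable one_ne_zero x)
  simpa using hparts

end Haar

lemma abs_indicator_lt_norm_le {E : Type*} [SeminormedAddCommGroup E] {ε : ℝ} (hε : 0 < ε)
    (z : E) : |{z : E | ε < ‖z‖}.indicator 1 z| ≤ ε⁻¹ * ‖z‖ := by
  by_cases hz : ε < ‖z‖
  · simpa [hz, inv_mul_eq_div, one_le_div hε] using hz.le
  · simpa [hz] using by positivity

section DilationKernel

open Module (finrank)

variable {E : Type*} [NormedAddCommGroup E] [NormedSpace ℝ E]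

/-- The superposition of the dilates of `φ` at the scales `0 < s < 1`, each of mass `∫ φ`,
against `ds / s`. For `φ = χ(y) ∂η_i/∂z_j(y, ·)` it is the kernel `K(y, ·)`. -/
noncomputable def dilationKernel (φ : E → ℝ) (z : E) : ℝ :=
  ∫ s in Ioo (0 : ℝ) 1, φ (s⁻¹ • z) * (s ^ (finrank ℝ E + 1))⁻¹

lemma mul_dilation_smul (m φ : E → ℝ) {s : ℝ} (hs : 0 < s) (w : E) :
    m (s • w) * (φ (s⁻¹ • s • w) * (s ^ (finrank ℝ E + 1))⁻¹) =
      (s ^ finrank ℝ E)⁻¹ * (m (s • w) * s⁻¹ * φ w) := by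
  rw [inv_smul_smul₀ hs.ne', pow_succ, mul_inv]
  ring

variable [FiniteDimensional ℝ E] [MeasurableSpace E] [BorelSpace E] {μ : Measure E}
  {m φ : E → ℝ} {C : ℝ}

lemma integrable_prod_smul_mul_inv [SFinite μ] (hm : Measurable m) (hmC : ∀ z, |m z| ≤ C * ‖z‖)
    (hφ : Measurable φ) (hφ₁ : Integrable (fun w => ‖w‖ * φ w) μ) :
    Integrable (fun p : E × ℝ => m (p.2 • p.1) * p.2⁻¹ * φ p.1)
      (μ.prod (volume.restrict (Ioo 0 1))) := by
  refine ((hφ₁.norm.const_mul C).comp_fst _).mono'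
    (Measurable.aestronglyMeasurable (by fun_prop)) ?_
  have hscale : ∀ᵐ p : E × ℝ ∂μ.prod (volume.restrict (Ioo 0 1)), p.2 ∈ Ioo (0 : ℝ) 1 :=
    Measure.quasiMeasurePreserving_snd.ae (ae_restrict_mem measurableSet_Ioo)
  filter_upwards [hscale] with p hp
  have hm' : |m (p.2 • p.1)| * p.2⁻¹ ≤ C * ‖p.1‖ := by
    rw [← div_eq_mul_inv, div_le_iff₀ hp.1]
    simpa [norm_smul, abs_of_pos hp.1, mul_assoc, mul_comm, mul_left_comm] using hmC (p.2 • p.1)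
  calc ‖m (p.2 • p.1) * p.2⁻¹ * φ p.1‖ = |m (p.2 • p.1)| * p.2⁻¹ * |φ p.1| := by
        simp [abs_of_pos hp.1]
    _ ≤ C * ‖p.1‖ * |φ p.1| := by gcongr
    _ = C * ‖‖p.1‖ * φ p.1‖ := by simp [mul_assoc]

variable (μ) [μ.IsAddHaarMeasure]

lemma integral_mul_dilation (m φ : E → ℝ) {s : ℝ} (hs : 0 < s) :
    ∫ z, m z * (φ (s⁻¹ • z) * (s ^ (finrank ℝ E + 1))⁻¹) ∂μ =
      ∫ w, m (s • w) * s⁻¹ * φ w ∂μ := by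
  have hscale := Measure.integral_comp_smul_of_nonneg μ
    (fun z => m z * (φ (s⁻¹ • z) * (s ^ (finrank ℝ E + 1))⁻¹)) s (hR := hs.le)
  simp only [mul_dilation_smul m φ hs, integral_const_mul, smul_eq_mul] at hscale
  exact (mul_left_cancel₀ (inv_ne_zero (pow_ne_zero _ hs.ne')) hscale).symm

lemma integrable_mul_dilation_iff (m φ : E → ℝ) {s : ℝ} (hs : 0 < s) :
    Integrable (fun z => m z * (φ (s⁻¹ • z) * (s ^ (finrank ℝ E + 1))⁻¹)) μ ↔
      Integrable (fun w => m (s • w) * s⁻¹ * φ w) μ := by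
  rw [← integrable_comp_smul_iff μ _ hs.ne']
  simp only [mul_dilation_smul m φ hs]
  exact integrable_const_mul_iff (inv_ne_zero (pow_ne_zero _ hs.ne')).isUnit _

variable {μ}

lemma integrable_prod_mul_dilation (hm : Measurable m) (hmC : ∀ z, |m z| ≤ C * ‖z‖)
    (hφ : Measurable φ) (hφ₁ : Integrable (fun w => ‖w‖ * φ w) μ) :
    Integrable (fun p : E × ℝ => m p.1 * (φ (p.2⁻¹ • p.1) * (p.2 ^ (finrank ℝ E + 1))⁻¹))
      (μ.prod (volume.restrict (Ioo 0 1))) := by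
  have hsmul := integrable_prod_smul_mul_inv hm hmC hφ hφ₁
  obtain ⟨hslice, hnorm⟩ := (integrable_prod_iff' hsmul.aestronglyMeasurable).1 hsmul
  refine (integrable_prod_iff' (Measurable.aestronglyMeasurable (by fun_prop))).2 ⟨?_, ?_⟩
  · filter_upwards [hslice, ae_restrict_mem measurableSet_Ioo] with s hs hs₀
    exact (integrable_mul_dilation_iff μ m φ hs₀.1).2 hs
  · refine hnorm.congr ?_
    filter_upwards [ae_restrict_mem measurableSet_Ioo] with s hs
    have habs : |s| = s := abs_of_pos hs.1
    simpa [habs] using (integral_mul_dilation μ (fun z => |m z|) (fun z => |φ z|) hs.1).symm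

lemma integrable_mul_dilationKernel (hm : Measurable m) (hmC : ∀ z, |m z| ≤ C * ‖z‖)
    (hφ : Measurable φ) (hφ₁ : Integrable (fun w => ‖w‖ * φ w) μ) :
    Integrable (fun z => m z * dilationKernel φ z) μ := by
  simpa only [integral_const_mul] using!
    (integrable_prod_mul_dilation hm hmC hφ hφ₁).integral_prod_left

lemma integrable_mul_setIntegral_smul_mul_inv (hm : Measurable m) (hmC : ∀ z, |m z| ≤ C * ‖z‖)
    (hφ : Measurable φ) (hφ₁ : Integrable (fun w => ‖w‖ * φ w) μ) :
    Integrable (fun w => φ w * ∫ s in Ioo (0 : ℝ) 1, m (s • w) * s⁻¹) μ := by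
  have hprod := (integrable_prod_smul_mul_inv hm hmC hφ hφ₁).integral_prod_left
  simp only [integral_mul_const] at hprod
  exact hprod.congr (.of_forall fun w => mul_comm _ _)

lemma integral_mul_dilationKernel (hm : Measurable m) (hmC : ∀ z, |m z| ≤ C * ‖z‖)
    (hφ : Measurable φ) (hφ₁ : Integrable (fun w => ‖w‖ * φ w) μ) :
    ∫ z, m z * dilationKernel φ z ∂μ =
      ∫ w, φ w * (∫ s in Ioo (0 : ℝ) 1, m (s • w) * s⁻¹) ∂μ := by
  calc ∫ z, m z * dilationKernel φ z ∂μ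
      = ∫ z, (∫ s in Ioo (0 : ℝ) 1,
          m z * (φ (s⁻¹ • z) * (s ^ (finrank ℝ E + 1))⁻¹)) ∂μ := by
        simp only [integral_const_mul, dilationKernel]
    _ = ∫ s in Ioo (0 : ℝ) 1, (∫ z, m z * (φ (s⁻¹ • z) * (s ^ (finrank ℝ E + 1))⁻¹) ∂μ) :=
        integral_integral_swap (integrable_prod_mul_dilation hm hmC hφ hφ₁)
    _ = ∫ s in Ioo (0 : ℝ) 1, (∫ w, m (s • w) * s⁻¹ * φ w ∂μ) :=
        setIntegral_congr_fun measurableSet_Ioo fun s hs => integral_mul_dilation μ m φ hs.1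
    _ = ∫ w, (∫ s in Ioo (0 : ℝ) 1, m (s • w) * s⁻¹ * φ w) ∂μ :=
        (integral_integral_swap (integrable_prod_smul_mul_inv hm hmC hφ hφ₁)).symm
    _ = ∫ w, φ w * (∫ s in Ioo (0 : ℝ) 1, m (s • w) * s⁻¹) ∂μ := by
        simp only [integral_mul_const, mul_comm (φ _)]

lemma integrableOn_dilationKernel (hφ : Measurable φ)
    (hφ₁ : Integrable (fun w => ‖w‖ * φ w) μ) {ε : ℝ} (hε : 0 < ε) :
    IntegrableOn (dilationKernel φ) {z | ε < ‖z‖} μ := by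
  have hmeas : MeasurableSet {z : E | ε < ‖z‖} := measurableSet_lt measurable_const measurable_norm
  rw [← integrable_indicator_iff hmeas]
  simpa only [← indicator_mul_left, Pi.one_apply, one_mul] using!
    integrable_mul_dilationKernel (measurable_one.indicator hmeas)
      (abs_indicator_lt_norm_le hε) hφ hφ₁

lemma setIntegral_dilationKernel (hφ : Measurable φ)
    (hφ₁ : Integrable (fun w => ‖w‖ * φ w) μ) {ε : ℝ} (hε : 0 < ε) :
    ∫ z in {z | ε < ‖z‖}, dilationKernel φ z ∂μ =
      ∫ w, φ w * (Real.log (max ‖w‖ ε) - Real.log ε) ∂μ := by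
  have hmeas : MeasurableSet {z : E | ε < ‖z‖} := measurableSet_lt measurable_const measurable_norm
  have hscales (w : E) :
      ∫ s in Ioo (0 : ℝ) 1, {z : E | ε < ‖z‖}.indicator 1 (s • w) * s⁻¹ =
        Real.log (max ‖w‖ ε) - Real.log ε := by
    rw [← integral_inv_Ioo_inter_lt_mul hε]
    refine setIntegral_congr_fun measurableSet_Ioo fun s hs => ?_
    simp [indicator_apply, norm_smul, abs_of_pos hs.1]
  rw [← integral_indicator hmeas]
  simp only [← hscales]
  rw [← integral_mul_dilationKernel (measurable_one.indicator hmeas)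
    (abs_indicator_lt_norm_le hε) hφ hφ₁]
  simp only [← indicator_mul_left, Pi.one_apply, one_mul]

lemma tendsto_setIntegral_dilationKernel [Nontrivial E] (hφ : Measurable φ)
    (hφ₁ : Integrable (fun w => ‖w‖ * φ w) μ) (hφ₀ : ∫ w, φ w ∂μ = 0) (hφi : Integrable φ μ)
    (hφlog : Integrable (fun w => φ w * Real.log ‖w‖) μ) :
    Tendsto (fun ε => ∫ z in {z | ε < ‖z‖}, dilationKernel φ z ∂μ) (𝓝[>] 0)
      (𝓝 (∫ w, φ w * Real.log ‖w‖ ∂μ)) := by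
  have hdom {ε : ℝ} (hε : ε ∈ Ioo (0 : ℝ) 1) :
      ∀ᵐ w ∂μ, ‖φ w * Real.log (max ‖w‖ ε)‖ ≤ ‖φ w * Real.log ‖w‖‖ := by
    filter_upwards [Measure.ae_ne μ 0] with w hw
    rw [norm_mul, norm_mul]
    gcongr
    exact abs_log_max_le (norm_pos_iff.2 hw) hε.1 hε.2.le
  have hmeas (ε : ℝ) : AEStronglyMeasurable (fun w => φ w * Real.log (max ‖w‖ ε)) μ :=
    Measurable.aestronglyMeasurable (by fun_prop)
  have hrenormalized {ε : ℝ} (hε : ε ∈ Ioo (0 : ℝ) 1) :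
      ∫ w, φ w * Real.log (max ‖w‖ ε) ∂μ = ∫ z in {z | ε < ‖z‖}, dilationKernel φ z ∂μ := by
    simp only [setIntegral_dilationKernel hφ hφ₁ hε.1, mul_sub]
    rw [integral_sub (hφlog.norm.mono' (hmeas ε) (hdom hε)) (hφi.mul_const _), integral_mul_const,
      hφ₀, zero_mul, sub_zero]
  have hsmall : ∀ᶠ ε : ℝ in 𝓝[>] 0, ε ∈ Ioo (0 : ℝ) 1 := Ioo_mem_nhdsGT one_pos
  refine Tendsto.congr' (hsmall.mono fun ε hε => hrenormalized hε) ?_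
  refine tendsto_integral_filter_of_dominated_convergence _ (.of_forall hmeas)
    (hsmall.mono fun ε hε => hdom hε) hφlog.norm ?_
  filter_upwards [Measure.ae_ne μ 0] with w hw
  refine tendsto_const_nhds.congr' ?_
  filter_upwards [Ioo_mem_nhdsGT (norm_pos_iff.2 hw)] with ε hε
  rw [max_eq_left hε.2.le]

end DilationKernel

section FinitePart

variable {E : Type*} [NormedAddCommGroup E] [NormedSpace ℝ E] {χ : E → ℝ}

/-- The Hadamard finite part of the divergent ray integral `∫₀¹ χ(y + s w) ds / s` truncated to
`ε < ‖s w‖`: what remains of it as `ε → 0` once `-χ(y) log ε` has been removed. -/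
noncomputable def rayFinitePart (χ : E → ℝ) (y w : E) : ℝ :=
  (∫ s in Ioo (0 : ℝ) 1, (χ (y + s • w) - χ y) * s⁻¹) + χ y * Real.log ‖w‖

lemma boundedLipschitzWith_rayFinitePart {A B : ℝ} (hχ : Differentiable ℝ χ)
    (hA : BoundedLipschitzWith A χ) (hB : BoundedLipschitzWith B (fderiv ℝ χ)) (w : E) :
    BoundedLipschitzWith (B * ‖w‖ + ‖Real.log ‖w‖‖ * A) (fun y => rayFinitePart χ y w) := by
  have hquotient : ∀ᵐ s ∂volume.restrict (Ioo (0 : ℝ) 1),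
      BoundedLipschitzWith (B * ‖w‖) (fun y => (χ (y + s • w) - χ y) * s⁻¹) := by
    filter_upwards [ae_restrict_mem measurableSet_Ioo] with s hs
    have hconst : ‖s⁻¹‖ * (B * ‖s • w‖) = B * ‖w‖ := by
      rw [norm_smul, norm_inv, mul_left_comm B, inv_mul_cancel_left₀ (norm_ne_zero_iff.2 hs.1.ne')]
    simpa only [hconst, mul_comm s⁻¹] using (hB.translate_sub hχ (s • w)).const_mul s⁻¹
  have hmeas (y : E) : AEStronglyMeasurable (fun s : ℝ => (χ (y + s • w) - χ y) * s⁻¹)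
      (volume.restrict (Ioo 0 1)) := by
    have hcont : Continuous fun s : ℝ => χ (y + s • w) - χ y :=
      (hχ.continuous.comp (by fun_prop)).sub continuous_const
    exact (hcont.measurable.mul measurable_inv).aestronglyMeasurable
  have hintegral := BoundedLipschitzWith.integral hmeas (integrable_const _) hquotient
  simp only [integral_const, measureReal_restrict_apply_univ, sub_zero,
    Real.volume_real_Ioo_of_le zero_le_one, one_smul] at hintegral
  simpa only [rayFinitePart, mul_comm (Real.log _)] using
    hintegral.add (hA.const_mul (Real.log ‖w‖))

variable [FiniteDimensional ℝ E] [MeasurableSpace E] [BorelSpace E]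

lemma measurable_rayFinitePart (hχ : Measurable χ) (y : E) : Measurable (rayFinitePart χ y) := by
  have hquotient : StronglyMeasurable fun p : E × ℝ => (χ (y + p.2 • p.1) - χ y) * p.2⁻¹ :=
    Measurable.stronglyMeasurable (by fun_prop)
  exact hquotient.integral_prod_right.measurable.add (by fun_prop)

variable {μ : Measure E} [μ.IsAddHaarMeasure] [Nontrivial E]

theorem tendsto_setIntegral_mul_dilationKernel {φ : E → ℝ} {y : E} {L : ℝ} (hχ : Measurable χ)
    (hχL : ∀ z, |χ (y + z) - χ y| ≤ L * ‖z‖) (hφ : Measurable φ)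
    (hφ₁ : Integrable (fun w => ‖w‖ * φ w) μ) (hφ₀ : ∫ w, φ w ∂μ = 0) (hφi : Integrable φ μ)
    (hφlog : Integrable (fun w => φ w * Real.log ‖w‖) μ) :
    Tendsto (fun ε => ∫ z in {z | ε < ‖z‖}, χ (y + z) * dilationKernel φ z ∂μ) (𝓝[>] 0)
      (𝓝 (∫ w, φ w * rayFinitePart χ y w ∂μ)) := by
  have hm : Measurable fun z => χ (y + z) - χ y := by fun_prop
  have hregular := integrable_mul_dilationKernel hm hχL hφ hφ₁
  have hlim := ((aecover_lt_norm μ).integral_tendsto_of_countably_generated hregular).add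
    ((tendsto_setIntegral_dilationKernel hφ hφ₁ hφ₀ hφi hφlog).const_mul (χ y))
  have hvalue : ∫ w, φ w * rayFinitePart χ y w ∂μ =
      ∫ z, (χ (y + z) - χ y) * dilationKernel φ z ∂μ + χ y * ∫ w, φ w * Real.log ‖w‖ ∂μ := by
    rw [integral_mul_dilationKernel hm hχL hφ hφ₁, ← integral_const_mul,
      ← integral_add (integrable_mul_setIntegral_smul_mul_inv hm hχL hφ hφ₁) (hφlog.const_mul _)]
    simp only [rayFinitePart, mul_add, mul_left_comm]
  rw [hvalue]
  refine hlim.congr' ?_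
  filter_upwards [self_mem_nhdsWithin] with ε hε
  rw [← integral_const_mul, ← integral_add hregular.integrableOn
    ((integrableOn_dilationKernel hφ hφ₁ hε).const_mul _)]
  simp only [sub_mul, sub_add_cancel]

theorem exists_boundedLipschitzWith_integral_mul_rayFinitePart {Φ : E × E → ℝ}
    (hχ : ContDiff ℝ 2 χ) (hχc : HasCompactSupport χ) (hΦ : ContDiff ℝ 1 Φ)
    (hΦc : HasCompactSupport Φ) :
    ∃ C, BoundedLipschitzWith C (fun y => ∫ w, Φ (y, w) * rayFinitePart χ y w ∂μ) := by
  obtain ⟨A, hA⟩ := BoundedLipschitzWith.exists_of_contDiff (hχ.of_le one_le_two) hχc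
  obtain ⟨B, hB⟩ := BoundedLipschitzWith.exists_of_contDiff
    (hχ.fderiv_right (m := 1) le_rfl) (hχc.fderiv ℝ)
  obtain ⟨M, hM⟩ := BoundedLipschitzWith.exists_of_contDiff hΦ hΦc
  set S : Set E := Prod.snd '' tsupport Φ
  have hS : IsCompact S := hΦc.image continuous_snd
  have hnorm : IntegrableOn (fun w => B * ‖w‖) S μ :=
    (by fun_prop : Continuous fun w : E => B * ‖w‖).continuousOn.integrableOn_compact hS
  have hlog : IntegrableOn (fun w => ‖Real.log ‖w‖‖ * A) S μ :=
    ((locallyIntegrable_log_norm μ).integrableOn_isCompact hS).norm.mul_const A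
  have hbound : IntegrableOn (fun w => 2 * (M * (B * ‖w‖ + ‖Real.log ‖w‖‖ * A))) S μ :=
    ((hnorm.add hlog).const_mul M).const_mul 2
  refine ⟨_, BoundedLipschitzWith.integral (fun y => ?_)
    (hbound.integrable_indicator hS.measurableSet)
    (.of_forall fun w => ?_)⟩
  · have := measurable_rayFinitePart hχ.continuous.measurable y
    have := hΦ.continuous
    exact Measurable.aestronglyMeasurable (by fun_prop)
  · by_cases hw : w ∈ S
    · simpa only [indicator_of_mem hw] using
        (hM.comp_isometry (Isometry.of_dist_eq fun y y' => by simp [Prod.dist_eq])).mul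
          (boundedLipschitzWith_rayFinitePart (hχ.differentiable two_ne_zero) hA hB w)
    · have hzero (y : E) : Φ (y, w) = 0 :=
        image_eq_zero_of_notMem_tsupport fun h => hw ⟨_, h, rfl⟩
      constructor <;> simp [hw, hzero]

end FinitePart

section Kernel

variable {E : Type*} [NormedAddCommGroup E] [NormedSpace ℝ E]

/-- The paper's `∂η_i/∂z_j (y, z)` with `η_i(y, z) = z_i ω(y + z)`, where an arbitrary linear
functional `ℓ` replaces the coordinate `z_i` and an arbitrary vector `v` the direction `e_j`. -/
noncomputable def etaDeriv (ω : E → ℝ) (ℓ : E →L[ℝ] ℝ) (v y z : E) : ℝ :=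
  fderiv ℝ (fun w => ℓ w * ω (y + w)) z v

variable {ω χ : E → ℝ}

lemma etaDeriv_eq (hω : Differentiable ℝ ω) (ℓ : E →L[ℝ] ℝ) (v y z : E) :
    etaDeriv ω ℓ v y z = ℓ z * fderiv ℝ ω (y + z) v + ω (y + z) * ℓ v := by
  have hshift : HasFDerivAt (fun w => ω (y + w)) (fderiv ℝ ω (y + z)) z :=
    (hasFDerivAt_comp_add_left y).2 (hω _).hasFDerivAt
  have hmul : HasFDerivAt (fun w => ℓ w * ω (y + w)) _ z := ℓ.hasFDerivAt.mul hshift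
  simp [etaDeriv, hmul.fderiv]

lemma contDiff_etaDeriv {n : WithTop ℕ∞} (hω : ContDiff ℝ (n + 1) ω) (ℓ : E →L[ℝ] ℝ) (v : E) :
    ContDiff ℝ n fun p : E × E => etaDeriv ω ℓ v p.1 p.2 := by
  simp only [etaDeriv_eq (hω.differentiable (by simp))]
  have : ContDiff ℝ n ω := hω.of_le le_self_add
  have : ContDiff ℝ n (fderiv ℝ ω) := hω.fderiv_right le_rfl
  fun_prop

lemma etaDeriv_eq_zero_of_notMem_tsupport (ℓ : E →L[ℝ] ℝ) (v : E) {y z : E}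
    (hyz : y + z ∉ tsupport ω) : etaDeriv ω ℓ v y z = 0 := by
  have hz : z ∉ tsupport fun w => ℓ w * ω (y + w) := fun h =>
    hyz (tsupport_comp_subset_preimage ω (continuous_const_add y) (tsupport_mul_subset_right h))
  exact image_eq_zero_of_notMem_tsupport fun h => hz (tsupport_fderiv_apply_subset ℝ v h)

lemma hasCompactSupport_mul_etaDeriv (hχ : HasCompactSupport χ) (hω : HasCompactSupport ω)
    (ℓ : E →L[ℝ] ℝ) (v : E) :
    HasCompactSupport fun p : E × E => χ p.1 * etaDeriv ω ℓ v p.1 p.2 := by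
  refine HasCompactSupport.intro
    ((IsCompact.prod hχ hω).image (f := fun q : E × E => (q.1, q.2 - q.1)) (by fun_prop)) ?_
  rintro ⟨y, z⟩ hyz
  by_contra hne
  refine hyz ⟨(y, y + z), ⟨subset_tsupport _ (left_ne_zero_of_mul hne), ?_⟩, by simp⟩
  exact of_not_not fun h => right_ne_zero_of_mul hne (etaDeriv_eq_zero_of_notMem_tsupport ℓ v h)

variable [FiniteDimensional ℝ E] [MeasurableSpace E] [BorelSpace E] (μ : Measure E)
  [μ.IsAddHaarMeasure]

lemma integral_etaDeriv (hω : ContDiff ℝ 1 ω) (hωc : HasCompactSupport ω) (ℓ : E →L[ℝ] ℝ)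
    (v y : E) : ∫ z, etaDeriv ω ℓ v y z ∂μ = 0 :=
  integral_fderiv_apply_eq_zero_s8 μ (f := fun w => ℓ w * ω (y + w)) (by fun_prop)
    (hωc.comp_homeomorph (Homeomorph.addLeft y)).mul_left v

variable [Nontrivial E]

theorem tendsto_setIntegral_mul_dilationKernel_of_contDiff {Φ : E × E → ℝ} (hχ : ContDiff ℝ 2 χ)
    (hχc : HasCompactSupport χ) (hΦ : ContDiff ℝ 1 Φ) (hΦc : HasCompactSupport Φ)
    (hΦ₀ : ∀ y, ∫ w, Φ (y, w) ∂μ = 0) (y : E) :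
    Tendsto (fun ε => ∫ z in {z | ε < ‖z‖}, χ (y + z) * dilationKernel (fun w => Φ (y, w)) z ∂μ)
      (𝓝[>] 0) (𝓝 (∫ w, Φ (y, w) * rayFinitePart χ y w ∂μ)) := by
  have hφ : Continuous fun w => Φ (y, w) := by
    have := hΦ.continuous
    fun_prop
  have hφc : HasCompactSupport fun w => Φ (y, w) :=
    .intro (hΦc.isCompact.image continuous_snd) fun w hw =>
      image_eq_zero_of_notMem_tsupport fun h => hw ⟨_, h, rfl⟩
  obtain ⟨L, hL⟩ := BoundedLipschitzWith.exists_of_contDiff (hχ.of_le one_le_two) hχc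
  refine tendsto_setIntegral_mul_dilationKernel hχ.continuous.measurable
    (fun z => by simpa using hL.norm_sub_le (y + z) y) hφ.measurable ?_ (hΦ₀ y)
    (hφ.integrable_of_hasCompactSupport hφc) ?_
  · exact (continuous_norm.mul hφ).integrable_of_hasCompactSupport hφc.mul_left
  · exact (locallyIntegrable_log_norm μ).integrable_smul_left_of_hasCompactSupport hφ hφc

theorem Tstar_one_in_homogeneous_lipschitz_general (hχ : ContDiff ℝ 2 χ)
    (hχc : HasCompactSupport χ) (hω : ContDiff ℝ 2 ω) (hωc : HasCompactSupport ω)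
    (ℓ : E →L[ℝ] ℝ) (v : E) (K : E → E → ℝ)
    (hK : ∀ y z, z ≠ 0 → K y z = dilationKernel (fun w => χ y * etaDeriv ω ℓ v y w) z) :
    ∃ g : E → ℝ,
      (∀ y, Tendsto (fun ε : ℝ => ∫ x in {x | ε < ‖x - y‖}, χ x * K y (x - y) ∂μ)
        (𝓝[>] 0) (𝓝 (g y))) ∧
      ∃ C, BoundedLipschitzWith C g := by
  set Φ : E × E → ℝ := fun p => χ p.1 * etaDeriv ω ℓ v p.1 p.2
  have hΦ : ContDiff ℝ 1 Φ :=
    ((hχ.of_le one_le_two).comp contDiff_fst).mul (contDiff_etaDeriv hω ℓ v)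
  have hΦc : HasCompactSupport Φ := hasCompactSupport_mul_etaDeriv hχc hωc ℓ v
  have hΦ₀ (y : E) : ∫ w, Φ (y, w) ∂μ = 0 := by
    simp only [Φ, integral_const_mul, integral_etaDeriv μ (hω.of_le one_le_two) hωc, mul_zero]
  refine ⟨fun y => ∫ w, Φ (y, w) * rayFinitePart χ y w ∂μ, fun y => ?_,
    exists_boundedLipschitzWith_integral_mul_rayFinitePart hχ hχc hΦ hΦc⟩
  refine (tendsto_setIntegral_mul_dilationKernel_of_contDiff μ hχ hχc hΦ hΦc hΦ₀ y).congr' ?_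
  filter_upwards [self_mem_nhdsWithin] with ε (hε : 0 < ε)
  have htranslate := (measurePreserving_sub_right μ y).setIntegral_preimage_emb
    (MeasurableEquiv.subRight y).measurableEmbedding (fun z => χ (y + z) * K y z) {z | ε < ‖z‖}
  simp only [add_sub_cancel] at htranslate
  refine Eq.trans ?_ htranslate.symm
  refine setIntegral_congr_fun (measurableSet_lt measurable_const measurable_norm) fun z hz => ?_
  rw [hK y z (norm_pos_iff.1 (hε.trans hz))]

end Kernel

/-- The principal value `g(y) = lim_{ε→0⁺} ∫_{|x−y|>ε} χ(x) K(y, x−y) dx`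
exists for every `y`, and `g` belongs to `Λ̇_α(ℝⁿ)` for every `0 < α < 1`. -/
theorem Tstar_one_in_homogeneous_lipschitz
    (n : ℕ) (hn : 2 ≤ n)
    (Ω B : Set (EuclideanSpace ℝ (Fin n)))
    (hΩo : IsOpen Ω) (hΩb : Bornology.IsBounded Ω)
    (hBball : ∃ c r, 0 < r ∧ B = Metric.ball c r)
    (hBΩ : B ⊆ Ω)
    (hstar : ∀ x ∈ Ω, ∀ y ∈ B, segment ℝ x y ⊆ Ω)
    (ω : EuclideanSpace ℝ (Fin n) → ℝ)
    (hω : ContDiff ℝ (⊤ : ℕ∞) ω) (hωc : HasCompactSupport ω)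
    (hωsupp : tsupport ω ⊆ B) (hωint : ∫ x, ω x = 1)
    (Bt : Set (EuclideanSpace ℝ (Fin n)))
    (hBt : ∃ c r, 0 < r ∧ Bt = Metric.ball c r)
    (hΩBt : closure Ω ⊆ Bt)
    (d : ℝ) (hd : d = Metric.diam Bt)
    (χ : EuclideanSpace ℝ (Fin n) → ℝ)
    (hχ : ContDiff ℝ (⊤ : ℕ∞) χ) (hχc : HasCompactSupport χ)
    (hχsupp : tsupport χ ⊆ Bt) (hχ1 : ∀ x ∈ Ω, χ x = 1)
    (i j : Fin n)
    -- `∂η_i/∂z_j (y, z)` where `η_i (y, z) = z_i ω (y + z)`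
    (Dη : EuclideanSpace ℝ (Fin n) → EuclideanSpace ℝ (Fin n) → ℝ)
    (hDη : ∀ y z, Dη y z =
      fderiv ℝ (fun w : EuclideanSpace ℝ (Fin n) => w i * ω (y + w)) z (EuclideanSpace.single j 1))
    (K : EuclideanSpace ℝ (Fin n) → EuclideanSpace ℝ (Fin n) → ℝ)
    (hK : ∀ y z, z ≠ 0 → K y z =
      ∫ s in Set.Ioo (0:ℝ) 1, χ y * Dη y (s⁻¹ • z) * (s ^ (n + 1))⁻¹)
:    ∃ g : EuclideanSpace ℝ (Fin n) → ℝ,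
      (∀ y : EuclideanSpace ℝ (Fin n),
        Tendsto (fun ε : ℝ =>
            ∫ x in {x : EuclideanSpace ℝ (Fin n) | ε < ‖x - y‖}, χ x * K y (x - y))
          (𝓝[>] (0:ℝ)) (𝓝 (g y))) ∧
      (∀ α : ℝ, 0 < α → α < 1 → ∃ C : ℝ,
        ∀ y y' : EuclideanSpace ℝ (Fin n), |g y - g y'| ≤ C * ‖y - y'‖ ^ α) := by
  have : Nonempty (Fin n) := ⟨i⟩
  obtain rfl : Dη = etaDeriv ω (EuclideanSpace.proj i) (EuclideanSpace.single j 1) :=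
    funext₂ hDη
  obtain ⟨g, hg, C, hgC⟩ := Tstar_one_in_homogeneous_lipschitz_general volume
    (contDiff_infty.1 hχ 2) hχc (contDiff_infty.1 hω 2) hωc (EuclideanSpace.proj i)
    (EuclideanSpace.single j 1) K
    (fun y z hz => by simpa [dilationKernel] using hK y z hz)
  refine ⟨g, hg, fun α hα₀ hα₁ => ⟨2 * C, fun y y' => ?_⟩⟩
  rw [← Real.norm_eq_abs, ← dist_eq_norm y]
  exact hgC.norm_sub_le_rpow hα₀.le hα₁.le y y'
end
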